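/- arXiv:2312.09552 — 13 statements merged into one kernel-verified Lean document; each statement's English description precedes it below -/
import Mathlib

section
/- Let A, B, C be three affinely independent points in the Euclidean plane ℝ². Let E lie strictly between A and B, and D lie strictly between A and C, and let G be the intersection point of the cevians BD and CE (i.e., G lies on the open segment BD and on the open segment CE). Let F be a point lying strictly between B and E, and H a point lying strictly between D and C, such that F, G, H are collinear. Then dist(B,F)/dist(F,E) > dist(D,H)/dist(H,C). -/
/-!
Take `A` as origin and `b = B - A`, `c = C - A` as basis, so that `E = e b`, `D = d c`, `F = f b`,
`H = h c` with `e < f < 1` and `d < h < 1`. The claim `(1 - f) / (f - e) > (h - d) / (1 - h)` is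
equivalent to `f (1 - d) + h (1 - e) < 1 - d e`. The cevians meet at `G = p b + q c` with
`(1 - d e) p = e (1 - d)` and `(1 - d e) q = d (1 - e)`, and `G` lies on the line `FH` exactly when
`p / f + q / h = 1`, that is, `(1 - d) e / f + (1 - e) d / h = 1 - d e`. Now
`f + e / f < 1 + e` because `(1 - f) (f - e) > 0`, and likewise `h + d / h < 1 + d`; adding the two
with weights `1 - d` and `1 - e` and subtracting the incidence relation gives the claim.
-/

/-- The inequality in the affine coordinates of the triangle: `(p, q)` is the intersection point of
the cevians, and `hl` says that it lies on the line through `(f, 0)` and `(0, h)`. -/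
lemma cevian_coordinate_inequality {d e f h p q : ℝ} (hd : 0 < d) (he : 0 < e)
    (hf : e < f) (hf1 : f < 1) (hh : d < h) (hh1 : h < 1)
    (hp : p = (1 - q) * e) (hq : q = (1 - p) * d) (hl : p * h + q * f = f * h) :
    (h - d) * (f - e) < (1 - f) * (1 - h) := by
  have hp' : (1 - d * e) * p = e * (1 - d) := by linear_combination hp - e * hq
  have hq' : (1 - d * e) * q = d * (1 - e) := by linear_combination hq - d * hp
  have hf0 : 0 < f := he.trans hf
  have hh0 : 0 < h := hd.trans hh
  have key : f * h * ((1 - f) * (1 - h) - (h - d) * (f - e)) =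
      (1 - d) * h * ((1 - f) * (f - e)) + (1 - e) * f * ((1 - h) * (h - d)) := by
    linear_combination (1 - d * e) * hl - h * hp' - f * hq'
  have h1 : 0 < (1 - d) * h * ((1 - f) * (f - e)) :=
    mul_pos (mul_pos (by linarith) hh0) (mul_pos (by linarith) (by linarith))
  have h2 : 0 < (1 - e) * f * ((1 - h) * (h - d)) :=
    mul_pos (mul_pos (by linarith) hf0) (mul_pos (by linarith) (by linarith))
  have h3 := pos_of_mul_pos_right (key ▸ add_pos h1 h2) (mul_pos hf0 hh0).le
  linarith

lemma AffineIndependent.coeff_eq_zero {V : Type*} [AddCommGroup V] [Module ℝ V] {A B C : V}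
    (hABC : AffineIndependent ℝ ![A, B, C]) {y z : ℝ} (h : y • (B - A) + z • (C - A) = 0) :
    y = 0 ∧ z = 0 := by
  have key := affineIndependent_iff.1 hABC Finset.univ ![-(y + z), y, z]
    (by simp [Fin.sum_univ_three])
    (by rw [← h]; simp only [Fin.sum_univ_three, Matrix.cons_val]; module)
  exact ⟨by simpa using key 1 (Finset.mem_univ _), by simpa using key 2 (Finset.mem_univ _)⟩

lemma dist_div_dist_of_combo {V : Type*} [NormedAddCommGroup V] [NormedSpace ℝ V] {P Q : V}
    (hPQ : P ≠ Q) {s t : ℝ} (hs : 0 < s) (ht : 0 < t) (hst : s + t = 1) :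
    dist P (s • P + t • Q) / dist (s • P + t • Q) Q = t / s := by
  have h1 : P - (s • P + t • Q) = t • (P - Q) := by
    rw [eq_sub_of_add_eq hst]; module
  have h2 : (s • P + t • Q) - Q = s • (P - Q) := by
    rw [eq_sub_of_add_eq hst]; module
  rw [dist_eq_norm, dist_eq_norm, h1, h2, norm_smul, norm_smul, Real.norm_of_nonneg hs.le,
    Real.norm_of_nonneg ht.le, mul_div_mul_right _ _ (norm_ne_zero_iff.2 (sub_ne_zero.2 hPQ))]

/-- Lemma 2.1: the cevian ratio inequality.  If cevians `BD` and `CE` of triangle `ABC`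
meet at `G`, and a line through `G` meets the segments `BE` and `DC` at `F` and `H`,
then `|BF|/|FE| > |DH|/|HC|`. -/
theorem cevian_ratio_inequality
    (A B C D E F G H : EuclideanSpace ℝ (Fin 2))
    (hABC : AffineIndependent ℝ ![A, B, C])
    (hE : E ∈ openSegment ℝ A B)
    (hD : D ∈ openSegment ℝ A C)
    (hG₁ : G ∈ openSegment ℝ B D)
    (hG₂ : G ∈ openSegment ℝ C E)
    (hF : F ∈ openSegment ℝ B E)
    (hH : H ∈ openSegment ℝ D C)
    (hFGH : Collinear ℝ ({F, G, H} : Set (EuclideanSpace ℝ (Fin 2)))) :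
    dist B F / dist F E > dist D H / dist H C := by
  obtain ⟨e', e, he', he, hee, rfl⟩ := hE
  obtain ⟨d', d, hd', hd, hdd, rfl⟩ := hD
  obtain ⟨p, g, hp, hg, hpg, hG₁⟩ := hG₁
  obtain ⟨q, k, hq, hk, hqk, hG₂⟩ := hG₂
  obtain ⟨s, t, hs, ht, hst, hF⟩ := hF
  obtain ⟨u, v, hu, hv, huv, hH⟩ := hH
  obtain rfl : e' = 1 - e := by linarith
  obtain rfl : d' = 1 - d := by linarith
  obtain rfl : g = 1 - p := by linarith
  obtain rfl : k = 1 - q := by linarith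
  have hBE : B ≠ (1 - e) • A + e • B := by
    intro h
    have := (hABC.coeff_eq_zero (y := 1 - e) (z := 0)
      (by linear_combination (norm := module) h)).1
    linarith
  have hDC : (1 - d) • A + d • C ≠ C := by
    intro h
    have := (hABC.coeff_eq_zero (y := 0) (z := d - 1)
      (by linear_combination (norm := module) h)).2
    linarith
  -- Both descriptions of `G` have the same coordinates, which gives the two cevian equations.
  have hpq := hABC.coeff_eq_zero (y := p - (1 - q) * e) (z := (1 - p) * d - q)
    (by linear_combination (norm := module) hG₁ - hG₂)
  have hF' : F = A + (s + t * e) • (B - A) := by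
    rw [← hF, eq_sub_of_add_eq hst]; module
  have hH' : H = A + (u * d + v) • (C - A) := by
    rw [← hH, eq_sub_of_add_eq huv]; module
  have hG' : G = A + p • (B - A) + q • (C - A) := by
    rw [← hG₁, show q = (1 - p) * d by linarith [hpq.2]]; module
  have hf0 : 0 < s + t * e := by positivity
  have hl : p * (u * d + v) + q * (s + t * e) = (s + t * e) * (u * d + v) := by
    obtain ⟨w, hw⟩ := (collinear_iff_of_mem (p₀ := F) (by simp)).1 hFGH
    obtain ⟨r₁, hr₁⟩ := hw G (by simp)
    obtain ⟨r₂, hr₂⟩ := hw H (by simp)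
    rw [vadd_eq_add] at hr₁ hr₂
    -- Otherwise `H = F`, although these points lie on different sides of the triangle and differ from `A`.
    have hr₂0 : r₂ ≠ 0 := by
      rintro rfl
      have := (hABC.coeff_eq_zero (y := s + t * e) (z := -(u * d + v))
        (by rw [hF', hH'] at hr₂; linear_combination (norm := module) -hr₂)).1
      exact hf0.ne' this
    -- Eliminating the direction `w` leaves `r₂ (G - F) = r₁ (H - F)`.
    have h := hABC.coeff_eq_zero (y := r₂ * (p - (s + t * e)) + r₁ * (s + t * e))
      (z := r₂ * q - r₁ * (u * d + v)) (by
        have h : r₂ • (G - F) = r₁ • (H - F) := by rw [hr₁, hr₂]; module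
        rw [hF', hG', hH'] at h
        linear_combination (norm := module) h)
    apply mul_left_cancel₀ hr₂0
    linear_combination (u * d + v) * h.1 + (s + t * e) * h.2
  rw [gt_iff_lt, ← hF, ← hH, dist_div_dist_of_combo hBE hs ht hst,
    dist_div_dist_of_combo hDC hu hv huv, div_lt_div_iff₀ hu hs]
  have he1 : 0 < 1 - e := he'
  have hd1 : 0 < 1 - d := hd'
  obtain rfl : s = 1 - t := by linarith
  obtain rfl : u = 1 - v := by linarith
  have := cevian_coordinate_inequality hd he
    (by nlinarith [mul_pos hs he1]) (by nlinarith [mul_pos ht he1])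
    (by nlinarith [mul_pos hv hd1]) (by nlinarith [mul_pos hu hd1])
    (by linarith [hpq.1]) (by linarith [hpq.2]) hl
  refine lt_of_mul_lt_mul_right (a := (1 - d) * (1 - e)) ?_ (mul_pos hd1 he1).le
  linear_combination this
end

section
/- Let n ≥ 3 and let A : Fin n → ℝ² and C : Fin n → ℝ² be two strictly convex polygons listed in cyclic order. Then the set of tuples B : Fin n → ℝ² such that (i) for every i, B i lies strictly between A i and A (i+1) (indices mod n), (ii) B is a strictly convex polygon in cyclic order, and (iii) there exists k : Fin n such that for every i, C i lies strictly between B (k+i) and B (k+i+1) (indices mod n), has at most 4 elements. -/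
/-!
Fix the shift `k`.  Write `B j = (1 - t j) A j + t j A (j+1)`.  Since `C i` lies on the segment
from `B j` to `B (j+1)` with `j = k + i`, the number `t (j+1)` is an increasing and strictly convex
function of `t j`: in the affine frame at `A (j+1)` the relation reads
`p / (1 - t j) + q / t (j+1) = 1`, where `p, q > 0` are barycentric coordinates of `C i`.  Going
once around the polygon, `t 0` is a fixed point of a strictly convex function, so there are at most
two solutions for each shift (`no_three_solutions`).  The proof avoids composing the functions: for
three solutions `t < s < r` the ratio `(r j - s j) / (s j - t j)` strictly increases with `j`, which
is impossible on a cycle.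

At most two shifts admit a solution.  A solution with shift `k` puts `C 0` inside the ear
`A k, A (k+1), A (k+2)`, and two ears of a convex polygon overlap only if they are equal or
neighbouring (`shift_adjacent`).  Hence three admissible shifts force `n = 3`.  For a triangle, let
`P i j` be the barycentric coordinates of `C i` with respect to `A`, up to a common factor, and
`D k = ∏ i, P i (k+i)`.  The arithmetic-geometric mean inequality shows that a solution with shift
`k` forces `D (k+1) ^ 2 > D k * D (k+2)`, and these inequalities cannot hold for all three `k`
(`triangle_not_all_shifts`).
-/

/-- The signed area test: `X` lies strictly on the left of the directed line `P → Q`. -/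
def Ccw (P Q X : EuclideanSpace ℝ (Fin 2)) : Prop :=
  0 < (Q 0 - P 0) * (X 1 - P 1) - (Q 1 - P 1) * (X 0 - P 0)

/-- `A : Fin n → ℝ²` is a strictly convex polygon listed in cyclic order: the vertices are
pairwise distinct, no vertex lies in the convex hull of the remaining ones, and the listing
follows the cyclic order of the boundary of the convex hull.  Equivalently, for one of the
two orientations, every vertex `A j` with `j ≠ i, i+1` lies strictly on the same
(say left) side of every directed side `A i → A (i+1)`. -/
def StrictConvexCyclicPolygon {n : ℕ} [NeZero n] (A : Fin n → EuclideanSpace ℝ (Fin 2)) :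
    Prop :=
  (∀ i j : Fin n, j ≠ i → j ≠ i + 1 → Ccw (A i) (A (i + 1)) (A j)) ∨
  (∀ i j : Fin n, j ≠ i → j ≠ i + 1 → Ccw (A (i + 1)) (A i) (A j))

/-- Twice the signed area of the triangle `P Q X`. -/
def det2 (P Q X : EuclideanSpace ℝ (Fin 2)) : ℝ :=
  (Q 0 - P 0) * (X 1 - P 1) - (Q 1 - P 1) * (X 0 - P 0)

/-- `t` and `l` are the parameters of an inscribed and circumscribed polygon with shift `k`: its
vertices are `(1 - t j) A j + t j A (j+1)`, and `C i` divides the side from vertex `k + i` to vertex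
`k + i + 1` with weights `l i` and `1 - l i`. -/
def IsSol {n : ℕ} [NeZero n] (A C : Fin n → EuclideanSpace ℝ (Fin 2)) (k : Fin n)
    (t l : Fin n → ℝ) : Prop :=
  (∀ j, 0 < t j ∧ t j < 1) ∧ (∀ i, 0 < l i ∧ l i < 1) ∧
  ∀ i c, C i c = l i * ((1 - t (k + i)) * A (k + i) c + t (k + i) * A (k + i + 1) c) +
    (1 - l i) * ((1 - t (k + i + 1)) * A (k + i + 1) c + t (k + i + 1) * A (k + i + 1 + 1) c)

/-! ### Signed areas and the cyclic index set -/

/-- Both orientations are treated at once by carrying a sign `σ`. -/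
lemma exists_sign {n : ℕ} [NeZero n] {A : Fin n → EuclideanSpace ℝ (Fin 2)}
    (hA : StrictConvexCyclicPolygon A) :
    ∃ σ : ℝ, ∀ i j : Fin n, j ≠ i → j ≠ i + 1 → 0 < σ * det2 (A i) (A (i + 1)) (A j) := by
  rcases hA with h | h
  · refine ⟨1, fun i j h1 h2 => ?_⟩
    have := h i j h1 h2
    unfold Ccw at this
    unfold det2
    linarith
  · refine ⟨-1, fun i j h1 h2 => ?_⟩
    have := h i j h1 h2
    unfold Ccw at this
    unfold det2
    linarith

lemma one_ne_zero_fin {n : ℕ} [NeZero n] (hn : 3 ≤ n) : (1 : Fin n) ≠ 0 := by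
  intro h
  have := congrArg Fin.val h
  rw [Fin.val_one', Fin.val_zero, Nat.mod_eq_of_lt (by omega)] at this
  omega

lemma add_one_ne {n : ℕ} [NeZero n] (hn : 3 ≤ n) (j : Fin n) : j + 1 ≠ j := by
  intro h
  exact one_ne_zero_fin hn (by simpa using h)

lemma add_two_ne {n : ℕ} [NeZero n] (hn : 3 ≤ n) (j : Fin n) : j + 1 + 1 ≠ j := by
  intro h
  have h : (1 : Fin n) + 1 = 0 := by simpa [add_assoc] using h
  have := congrArg Fin.val h
  rw [Fin.val_add, Fin.val_one', Fin.val_zero, Nat.mod_eq_of_lt (a := 1) (by omega),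
    Nat.mod_eq_of_lt (by omega)] at this
  omega

lemma eq_three_of_add_three {n : ℕ} [NeZero n] (hn : 3 ≤ n) (j : Fin n)
    (h : j + 1 + 1 + 1 = j) : n = 3 := by
  have h : (1 : Fin n) + (1 + 1) = 0 := by simpa [add_assoc] using h
  by_contra hne
  have := congrArg Fin.val h
  rw [Fin.val_add, Fin.val_add, Fin.val_one', Fin.val_zero, Nat.mod_eq_of_lt (a := 1) (by omega),
    Nat.mod_eq_of_lt (a := 1 + 1) (by omega), Nat.mod_eq_of_lt (by omega)] at this
  omega

lemma cyclic_induction {n : ℕ} [NeZero n] {P : Fin n → Prop} (h0 : P 0)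
    (hs : ∀ j, P j → P (j + 1)) (j : Fin n) : P j := by
  obtain ⟨N, rfl⟩ : ∃ N, n = N + 1 := Nat.exists_eq_succ_of_ne_zero (NeZero.ne n)
  induction j using Fin.induction with
  | zero => exact h0
  | succ i ih =>
    rw [← Fin.coeSucc_eq_succ]
    exact hs _ ih

/-! ### At most two solutions for a fixed shift -/

section FixedShift

variable {n : ℕ} [NeZero n] {A C : Fin n → EuclideanSpace ℝ (Fin 2)} {σ : ℝ} {k : Fin n}

/-- Up to the factor `det2 (A j) (A (j+1)) (A (j+2))`, the left-hand side is the barycentric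
coordinate of `C i` at `A j`, where `j = k + i`. -/
lemma IsSol.det_first {t l : Fin n → ℝ} (h : IsSol A C k t l) (i : Fin n) :
    det2 (A (k + i + 1)) (A (k + i + 1 + 1)) (C i) =
      l i * (1 - t (k + i)) * det2 (A (k + i)) (A (k + i + 1)) (A (k + i + 1 + 1)) := by
  unfold det2
  rw [h.2.2 i 0, h.2.2 i 1]
  ring

/-- The analogue of `IsSol.det_first` for the barycentric coordinate at `A (j+2)`. -/
lemma IsSol.det_third {t l : Fin n → ℝ} (h : IsSol A C k t l) (i : Fin n) :
    det2 (A (k + i)) (A (k + i + 1)) (C i) =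
      (1 - l i) * t (k + i + 1) * det2 (A (k + i)) (A (k + i + 1)) (A (k + i + 1 + 1)) := by
  unfold det2
  rw [h.2.2 i 0, h.2.2 i 1]
  ring

/-- The analogue of `IsSol.det_first` for the barycentric coordinate at `A (j+1)`. -/
lemma IsSol.det_second {t l : Fin n → ℝ} (h : IsSol A C k t l) (i : Fin n) :
    det2 (A (k + i + 1 + 1)) (A (k + i)) (C i) =
      (l i * t (k + i) + (1 - l i) * (1 - t (k + i + 1))) *
        det2 (A (k + i)) (A (k + i + 1)) (A (k + i + 1 + 1)) := by
  unfold det2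
  rw [h.2.2 i 0, h.2.2 i 1]
  ring

lemma ear_det_pos (hn : 3 ≤ n)
    (hσ : ∀ i j : Fin n, j ≠ i → j ≠ i + 1 → 0 < σ * det2 (A i) (A (i + 1)) (A j)) (j : Fin n) :
    0 < σ * det2 (A j) (A (j + 1)) (A (j + 1 + 1)) :=
  hσ j (j + 1 + 1) (add_two_ne hn j) (add_one_ne hn (j + 1))

/-- Two solutions with the same shift have the same barycentric coordinates `p`, `q` of `C i`. -/
lemma IsSol.coord_eq (hn : 3 ≤ n)
    (hσ : ∀ i j : Fin n, j ≠ i → j ≠ i + 1 → 0 < σ * det2 (A i) (A (i + 1)) (A j))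
    {t l t' l' : Fin n → ℝ} (h : IsSol A C k t l) (h' : IsSol A C k t' l') (i : Fin n) :
    l i * (1 - t (k + i)) = l' i * (1 - t' (k + i)) ∧
      (1 - l i) * t (k + i + 1) = (1 - l' i) * t' (k + i + 1) := by
  have hne : det2 (A (k + i)) (A (k + i + 1)) (A (k + i + 1 + 1)) ≠ 0 :=
    right_ne_zero_of_mul (ear_det_pos hn hσ (k + i)).ne'
  exact ⟨mul_right_cancel₀ hne ((h.det_first i).symm.trans (h'.det_first i)),
    mul_right_cancel₀ hne ((h.det_third i).symm.trans (h'.det_third i))⟩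

/-- The weight `x` is increasing in the parameter `u`. -/
lemma weight_lt {x x' u u' : ℝ} (hx : 0 < x) (hu' : u' < 1)
    (h : x * (1 - u) = x' * (1 - u')) (huu : u < u') : x < x' := by
  by_contra! hle
  nlinarith [mul_le_mul_of_nonneg_right hle (sub_pos.2 hu').le, mul_pos hx (sub_pos.2 huu)]

/-- The next parameter `v` is increasing in the weight `x`. -/
lemma next_lt {x x' v v' : ℝ} (hx : x < 1) (hv' : 0 < v')
    (h : (1 - x) * v = (1 - x') * v') (hxx : x < x') : v < v' := by
  by_contra! hle
  nlinarith [mul_le_mul_of_nonneg_left hle (sub_pos.2 hx).le, mul_pos (sub_pos.2 hxx) hv']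

lemma IsSol.lt_of_lt (hn : 3 ≤ n)
    (hσ : ∀ i j : Fin n, j ≠ i → j ≠ i + 1 → 0 < σ * det2 (A i) (A (i + 1)) (A j))
    {t l t' l' : Fin n → ℝ} (h : IsSol A C k t l) (h' : IsSol A C k t' l')
    (h0 : t 0 < t' 0) (j : Fin n) : t j < t' j := by
  refine cyclic_induction (P := fun j => t j < t' j) h0 (fun j hj => ?_) j
  obtain ⟨i, rfl⟩ : ∃ i, j = k + i := ⟨j - k, by abel⟩
  obtain ⟨e1, e2⟩ := h.coord_eq hn hσ h' i
  exact next_lt (h.2.1 i).2 (h'.1 _).1 e2 (weight_lt (h.2.1 i).1 (h'.1 _).2 e1 hj)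

lemma IsSol.eq_of_eq (hn : 3 ≤ n)
    (hσ : ∀ i j : Fin n, j ≠ i → j ≠ i + 1 → 0 < σ * det2 (A i) (A (i + 1)) (A j))
    {t l t' l' : Fin n → ℝ} (h : IsSol A C k t l) (h' : IsSol A C k t' l')
    (h0 : t 0 = t' 0) : t = t' := by
  funext j
  refine cyclic_induction (P := fun j => t j = t' j) h0 (fun j hj => ?_) j
  obtain ⟨i, rfl⟩ : ∃ i, j = k + i := ⟨j - k, by abel⟩
  obtain ⟨e1, e2⟩ := h.coord_eq hn hσ h' i
  rw [hj] at e1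
  rw [mul_right_cancel₀ (sub_pos.2 (h'.1 _).2).ne' e1] at e2
  exact mul_left_cancel₀ (sub_pos.2 (h'.2.1 i).2).ne' e2

/-- Strict convexity of the step `u ↦ v` defined by `p / (1 - u) + q / v = 1`, expressed through
three points: the slope of the second chord exceeds that of the first.  Here `x`, `y`, `z` are the
weights `p / (1 - uᵢ)`. -/
lemma ratio_step {x y z u₁ u₂ u₃ v₁ v₂ v₃ p q : ℝ} (hx : 0 < x) (hxy : x < y) (hyz : y < z)
    (hz : z < 1) (hp : 0 < p) (hq : 0 < q)
    (e1 : x * (1 - u₁) = p) (e2 : y * (1 - u₂) = p) (e3 : z * (1 - u₃) = p)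
    (f1 : (1 - x) * v₁ = q) (f2 : (1 - y) * v₂ = q) (f3 : (1 - z) * v₃ = q) :
    (u₃ - u₂) * (v₂ - v₁) < (v₃ - v₂) * (u₂ - u₁) := by
  have hy : 0 < y := hx.trans hxy
  have hz0 : 0 < z := hy.trans hyz
  have hz1 : 0 < 1 - z := by linarith
  have hy1 : 0 < 1 - y := by linarith
  have hx1 : 0 < 1 - x := by linarith
  have a1 : u₁ = 1 - p / x := by field_simp; linarith
  have a2 : u₂ = 1 - p / y := by field_simp; linarith
  have a3 : u₃ = 1 - p / z := by field_simp; linarith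
  have b1 : v₁ = q / (1 - x) := by field_simp; linarith
  have b2 : v₂ = q / (1 - y) := by field_simp; linarith
  have b3 : v₃ = q / (1 - z) := by field_simp; linarith
  have l1 : (u₃ - u₂) * (v₂ - v₁) =
      p * q * (z - y) * (y - x) / (y * (1 - y) * (z * (1 - x))) := by
    rw [a2, a3, b1, b2]; field_simp; ring
  have l2 : (v₃ - v₂) * (u₂ - u₁) =
      p * q * (z - y) * (y - x) / (y * (1 - y) * (x * (1 - z))) := by
    rw [a1, a2, b2, b3]; field_simp; ring
  rw [l1, l2]
  have hN : 0 < p * q * (z - y) * (y - x) :=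
    mul_pos (mul_pos (mul_pos hp hq) (by linarith)) (by linarith)
  refine div_lt_div_of_pos_left hN (by positivity) ?_
  exact mul_lt_mul_of_pos_left (by nlinarith) (by positivity)

lemma no_three_ordered (hn : 3 ≤ n)
    (hσ : ∀ i j : Fin n, j ≠ i → j ≠ i + 1 → 0 < σ * det2 (A i) (A (i + 1)) (A j))
    {t s r lt ls lr : Fin n → ℝ} (ht : IsSol A C k t lt) (hs : IsSol A C k s ls)
    (hr : IsSol A C k r lr) (hts : t 0 < s 0) (hsr : s 0 < r 0) : False := by
  have h1 := ht.lt_of_lt hn hσ hs hts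
  have h2 := hs.lt_of_lt hn hσ hr hsr
  obtain ⟨j, hj⟩ := Finite.exists_max (fun j => (r j - s j) / (s j - t j))
  obtain ⟨i, rfl⟩ : ∃ i, j = k + i := ⟨j - k, by abel⟩
  obtain ⟨e1, f1⟩ := ht.coord_eq hn hσ hs i
  obtain ⟨e2, f2⟩ := hr.coord_eq hn hσ hs i
  have hlt := weight_lt (ht.2.1 i).1 (hs.1 _).2 e1 (h1 _)
  have hlr := weight_lt (hs.2.1 i).1 (hr.1 _).2 e2.symm (h2 _)
  have key := ratio_step (ht.2.1 i).1 hlt hlr (hr.2.1 i).2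
    (mul_pos (hs.2.1 i).1 (sub_pos.2 (hs.1 _).2)) (mul_pos (sub_pos.2 (hs.2.1 i).2) (hs.1 _).1)
    e1 rfl e2 f1 rfl f2
  have hmax := hj (k + i + 1)
  rw [div_le_div_iff₀ (sub_pos.2 (h1 _)) (sub_pos.2 (h1 _))] at hmax
  exact absurd hmax (not_le.2 key)

lemma no_three_solutions (hn : 3 ≤ n)
    (hσ : ∀ i j : Fin n, j ≠ i → j ≠ i + 1 → 0 < σ * det2 (A i) (A (i + 1)) (A j))
    {t s r lt ls lr : Fin n → ℝ} (ht : IsSol A C k t lt) (hs : IsSol A C k s ls)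
    (hr : IsSol A C k r lr) (hts : t ≠ s) (htr : t ≠ r) (hsr : s ≠ r) : False := by
  have n1 : t 0 ≠ s 0 := fun h => hts (ht.eq_of_eq hn hσ hs h)
  have n2 : t 0 ≠ r 0 := fun h => htr (ht.eq_of_eq hn hσ hr h)
  have n3 : s 0 ≠ r 0 := fun h => hsr (hs.eq_of_eq hn hσ hr h)
  rcases n1.lt_or_gt with a | a <;> rcases n2.lt_or_gt with b | b <;>
    rcases n3.lt_or_gt with c | c
  · exact no_three_ordered hn hσ ht hs hr a c
  · exact no_three_ordered hn hσ ht hr hs b c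
  · exact lt_asymm a (c.trans b)
  · exact no_three_ordered hn hσ hr ht hs b a
  · exact no_three_ordered hn hσ hs ht hr a b
  · exact lt_asymm a (b.trans c)
  · exact no_three_ordered hn hσ hs hr ht c b
  · exact no_three_ordered hn hσ hr hs ht c a

end FixedShift

/-! ### Admissible shifts are neighbours -/

/-- A vertex `A x` outside the ear `A j, A (j+1), A (j+2)` lies strictly beyond the diagonal from
`A j` to `A (j+2)`. -/
lemma beyond_diagonal {n : ℕ} [NeZero n] {A : Fin n → EuclideanSpace ℝ (Fin 2)} {σ : ℝ}
    (hσ : ∀ i j : Fin n, j ≠ i → j ≠ i + 1 → 0 < σ * det2 (A i) (A (i + 1)) (A j))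
    (j x : Fin n) (h0 : x ≠ j) (h1 : x ≠ j + 1) (h2 : x ≠ j + 1 + 1) :
    0 < σ * det2 (A j) (A (j + 1 + 1)) (A x) := by
  -- `g = det2 (A x) (A (x+1))` vanishes at `A x`; were `A x` in the ear, its value there would be
  -- a positive combination of values of `g` that are not all zero.
  have g1 : 0 < σ * det2 (A x) (A (x + 1)) (A (j + 1)) :=
    hσ x (j + 1) h1.symm (fun h => h0 (add_right_cancel h).symm)
  have g2 : 0 < σ * det2 (A x) (A (x + 1)) (A (j + 1 + 1)) :=
    hσ x (j + 1 + 1) h2.symm (fun h => h1 (add_right_cancel h).symm)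
  have g0 : 0 ≤ σ * det2 (A x) (A (x + 1)) (A j) := by
    by_cases h : j = x + 1
    · subst h
      simp [det2, mul_comm]
    · exact (hσ x j h0.symm h).le
  have d1 := hσ j x h0 h1
  have d2 := hσ (j + 1) x h1 h2
  have key : σ * det2 (A j) (A (j + 1 + 1)) (A x) * (σ * det2 (A x) (A (x + 1)) (A (j + 1))) =
      σ * det2 (A (j + 1)) (A (j + 1 + 1)) (A x) * (σ * det2 (A x) (A (x + 1)) (A j)) +
      σ * det2 (A j) (A (j + 1)) (A x) * (σ * det2 (A x) (A (x + 1)) (A (j + 1 + 1))) := by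
    unfold det2
    ring
  refine pos_of_mul_pos_left (b := σ * det2 (A x) (A (x + 1)) (A (j + 1))) ?_ g1.le
  rw [key]
  exact add_pos_of_nonneg_of_pos (mul_nonneg d2.le g0) (mul_pos d1 g2)

lemma shift_adjacent {n : ℕ} [NeZero n] (hn : 3 ≤ n) {A C : Fin n → EuclideanSpace ℝ (Fin 2)}
    {σ : ℝ} (hσ : ∀ i j : Fin n, j ≠ i → j ≠ i + 1 → 0 < σ * det2 (A i) (A (i + 1)) (A j))
    {k m : Fin n} {t l t' l' : Fin n → ℝ} (h : IsSol A C k t l) (h' : IsSol A C m t' l')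
    (hkm : m ≠ k) : m = k + 1 ∨ k = m + 1 := by
  by_contra! hcon
  obtain ⟨c1, c2⟩ := hcon
  -- The diagonal of the ear of `k` separates it from the vertices of the ear of `m`.
  have hge : ∀ x : Fin n, x ≠ k + 1 → 0 ≤ σ * det2 (A k) (A (k + 1 + 1)) (A x) := by
    intro x hx
    by_cases a : x = k
    · subst a
      simp [det2]
    by_cases b : x = k + 1 + 1
    · subst b
      simp [det2, mul_comm]
    exact (beyond_diagonal hσ k x a hx b).le
  have q0 := hge m c1
  have q1 := hge (m + 1) (fun e => hkm (add_right_cancel e))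
  have q2 := hge (m + 1 + 1) (fun e => c2 (add_right_cancel e).symm)
  have hneg : σ * det2 (A k) (A (k + 1 + 1)) (C 0) < 0 := by
    have e := h.det_second 0
    have hpos := ear_det_pos hn hσ k
    simp only [add_zero] at e
    have e' : σ * det2 (A k) (A (k + 1 + 1)) (C 0) =
        -((l 0 * t k + (1 - l 0) * (1 - t (k + 1))) *
          (σ * det2 (A k) (A (k + 1)) (A (k + 1 + 1)))) := by
      have : det2 (A k) (A (k + 1 + 1)) (C 0) = -det2 (A (k + 1 + 1)) (A k) (C 0) := by
        unfold det2
        ring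
      rw [this, e]
      ring
    rw [e', neg_lt_zero]
    refine mul_pos (add_pos (mul_pos (h.2.1 0).1 (h.1 _).1)
      (mul_pos (sub_pos.2 (h.2.1 0).2) (sub_pos.2 (h.1 _).2))) hpos
  have hsum : σ * det2 (A k) (A (k + 1 + 1)) (C 0) =
      l' 0 * (1 - t' m) * (σ * det2 (A k) (A (k + 1 + 1)) (A m)) +
      (l' 0 * t' m + (1 - l' 0) * (1 - t' (m + 1))) *
        (σ * det2 (A k) (A (k + 1 + 1)) (A (m + 1))) +
      (1 - l' 0) * t' (m + 1) * (σ * det2 (A k) (A (k + 1 + 1)) (A (m + 1 + 1))) := by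
    have e0 := h'.2.2 0 0
    have e1 := h'.2.2 0 1
    simp only [add_zero] at e0 e1
    unfold det2
    rw [e0, e1]
    ring
  have w := h'.2.1 0
  have w0 := h'.1 m
  have w1 := h'.1 (m + 1)
  have r0 := sub_pos.2 w.2
  have r1 := sub_pos.2 w0.2
  have r2 := sub_pos.2 w1.2
  have : 0 ≤ σ * det2 (A k) (A (k + 1 + 1)) (C 0) := by
    rw [hsum]
    exact add_nonneg (add_nonneg (mul_nonneg (mul_pos w.1 r1).le q0)
      (mul_nonneg (add_pos (mul_pos w.1 w0.1) (mul_pos r0 r2)).le q1))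
      (mul_nonneg (mul_pos r0 w1.1).le q2)
  exact absurd hneg (not_lt.2 this)

/-! ### Triangles -/

/-- The arithmetic-geometric mean inequality at one vertex of the triangle. -/
lemma amgm_step {l u v d : ℝ} (hl : 0 < l) (hl1 : l < 1) (hu : 0 < u) (hu1 : u < 1)
    (hv : 0 < v) (hv1 : v < 1) (hd : 0 < d) :
    (l * (1 - u) * d) * ((1 - l) * v * d) * (u * (1 - v)) <
      ((l * u + (1 - l) * (1 - v)) * d) ^ 2 * ((1 - u) * v) := by
  have h1 : 0 < l * u := mul_pos hl hu
  have h2 : 0 < (1 - l) * (1 - v) := mul_pos (sub_pos.2 hl1) (sub_pos.2 hv1)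
  have h3 : 0 < (1 - u) * v * d ^ 2 := mul_pos (mul_pos (sub_pos.2 hu1) hv) (by positivity)
  have h4 : (l * u) * ((1 - l) * (1 - v)) < (l * u + (1 - l) * (1 - v)) ^ 2 := by
    nlinarith [mul_pos h1 h2, sq_nonneg (l * u), sq_nonneg ((1 - l) * (1 - v)), pow_pos h1 2]
  nlinarith [mul_lt_mul_of_pos_right h4 h3]

/-- The product of the three inequalities `amgm_step`; the factors `u * (1 - v)` and `(1 - u) * v`
cancel around the cycle. -/
lemma amgm_cycle {l t : Fin 3 → ℝ} {d : ℝ} (hd : 0 < d) (hl : ∀ i, 0 < l i ∧ l i < 1)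
    (ht : ∀ i, 0 < t i ∧ t i < 1) {p q m : Fin 3 → ℝ} (k : Fin 3)
    (hp : ∀ i, p i = l i * (1 - t (k + i)) * d) (hq : ∀ i, q i = (1 - l i) * t (k + i + 1) * d)
    (hm : ∀ i, m i = (l i * t (k + i) + (1 - l i) * (1 - t (k + i + 1))) * d) :
    (p 0 * p 1 * p 2) * (q 0 * q 1 * q 2) < (m 0 * m 1 * m 2) ^ 2 := by
  have step : ∀ i, p i * q i * (t (k + i) * (1 - t (k + i + 1))) <
      m i ^ 2 * ((1 - t (k + i)) * t (k + i + 1)) := by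
    intro i
    rw [hp, hq, hm]
    exact amgm_step (hl i).1 (hl i).2 (ht _).1 (ht _).2 (ht _).1 (ht _).2 hd
  have s0 := step 0
  have s1 := step 1
  have s2 := step 2
  have pos : ∀ i, 0 < p i * q i * (t (k + i) * (1 - t (k + i + 1))) := by
    intro i
    rw [hp, hq]
    have a1 := (hl i).1
    have a2 := sub_pos.2 (hl i).2
    have a3 := (ht (k + i)).1
    have a4 := sub_pos.2 (ht (k + i)).2
    have a5 := (ht (k + i + 1)).1
    have a6 := sub_pos.2 (ht (k + i + 1)).2
    positivity
  have e0 : k + 0 + 1 = k + 1 := by rw [add_zero]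
  have e1 : k + 1 + 1 = k + 2 := by rw [add_assoc]; rfl
  have e2 : k + 2 + 1 = k + 0 := by rw [add_assoc]; rfl
  have p0 := pos 0
  have p1 := pos 1
  have p2 := pos 2
  rw [e0] at s0 p0
  rw [e1] at s1 p1
  rw [e2] at s2 p2
  have s01 := mul_lt_mul'' s0 s1 p0.le p1.le
  have s012 := mul_lt_mul'' s01 s2 (mul_pos p0 p1).le p2.le
  have hT : 0 < t (k + 0) * (1 - t (k + 0)) * (t (k + 1) * (1 - t (k + 1))) *
      (t (k + 2) * (1 - t (k + 2))) := by
    have a : ∀ j, 0 < t j * (1 - t j) := fun j => mul_pos (ht j).1 (sub_pos.2 (ht j).2)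
    exact mul_pos (mul_pos (a _) (a _)) (a _)
  refine lt_of_mul_lt_mul_right ?_ hT.le
  calc _ = _ := by ring
    _ < _ := s012
    _ = _ := by ring

lemma triangle_not_all_shifts {A C : Fin 3 → EuclideanSpace ℝ (Fin 2)} {σ : ℝ}
    (hσ : ∀ i j : Fin 3, j ≠ i → j ≠ i + 1 → 0 < σ * det2 (A i) (A (i + 1)) (A j))
    (h : ∀ k, ∃ t l, IsSol A C k t l) : False := by
  set d := σ * det2 (A 0) (A 1) (A 2) with hd
  have hdj : ∀ j, σ * det2 (A j) (A (j + 1)) (A (j + 1 + 1)) = d := by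
    intro j
    fin_cases j
    · rfl
    · change σ * det2 (A 1) (A 2) (A 0) = d
      rw [hd]
      unfold det2
      ring
    · change σ * det2 (A 2) (A 0) (A 1) = d
      rw [hd]
      unfold det2
      ring
  have hdpos : 0 < d := by
    rw [← hdj 0]
    exact ear_det_pos le_rfl hσ 0
  let P : Fin 3 → Fin 3 → ℝ := fun i j => σ * det2 (A (j + 1)) (A (j + 1 + 1)) (C i)
  have h3 : ∀ j : Fin 3, j + 1 + 1 + 1 = j := by decide
  have ineq : ∀ k, (P 0 (k + 0) * P 1 (k + 1) * P 2 (k + 2)) *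
      (P 0 (k + 0 + 1 + 1) * P 1 (k + 1 + 1 + 1) * P 2 (k + 2 + 1 + 1)) <
      (P 0 (k + 0 + 1) * P 1 (k + 1 + 1) * P 2 (k + 2 + 1)) ^ 2 := by
    intro k
    obtain ⟨t, l, hs⟩ := h k
    refine amgm_cycle (p := fun i => P i (k + i)) (q := fun i => P i (k + i + 1 + 1))
      (m := fun i => P i (k + i + 1)) hdpos hs.2.1 hs.1 k (fun i => ?_) (fun i => ?_) (fun i => ?_)
    · simp only [P]
      rw [hs.det_first, ← hdj (k + i)]
      ring
    · simp only [P]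
      rw [h3, hs.det_third, ← hdj (k + i)]
      ring
    · simp only [P]
      rw [h3, hs.det_second, ← hdj (k + i)]
      ring
  have Ppos : ∀ i j, 0 < P i j := by
    intro i j
    obtain ⟨k, rfl⟩ : ∃ k, j = k + i := ⟨j - i, by abel⟩
    obtain ⟨t, l, hs⟩ := h k
    have e : P i (k + i) = l i * (1 - t (k + i)) * d := by
      simp only [P]
      rw [hs.det_first, ← hdj (k + i)]
      ring
    rw [e]
    exact mul_pos (mul_pos (hs.2.1 i).1 (sub_pos.2 (hs.1 _).2)) hdpos
  obtain ⟨D0, hD0⟩ : ∃ x, x = P 0 0 * P 1 1 * P 2 2 := ⟨_, rfl⟩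
  obtain ⟨D1, hD1⟩ : ∃ x, x = P 0 1 * P 1 2 * P 2 0 := ⟨_, rfl⟩
  obtain ⟨D2, hD2⟩ : ∃ x, x = P 0 2 * P 1 0 * P 2 1 := ⟨_, rfl⟩
  have i0 : D0 * D2 < D1 ^ 2 := by rw [hD0, hD1, hD2]; exact ineq 0
  have i1 : D1 * D0 < D2 ^ 2 := by rw [hD0, hD1, hD2]; exact ineq 1
  have i2 : D2 * D1 < D0 ^ 2 := by rw [hD0, hD1, hD2]; exact ineq 2
  have q0 : 0 < D0 := hD0 ▸ mul_pos (mul_pos (Ppos _ _) (Ppos _ _)) (Ppos _ _)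
  have q1 : 0 < D1 := hD1 ▸ mul_pos (mul_pos (Ppos _ _) (Ppos _ _)) (Ppos _ _)
  have q2 : 0 < D2 := hD2 ▸ mul_pos (mul_pos (Ppos _ _) (Ppos _ _)) (Ppos _ _)
  have m1 := mul_lt_mul'' i0 i1 (mul_pos q0 q2).le (mul_pos q1 q0).le
  have m2 := mul_lt_mul'' m1 i2 (mul_pos (mul_pos q0 q2) (mul_pos q1 q0)).le (mul_pos q2 q1).le
  refine absurd m2 (not_lt.2 (le_of_eq ?_))
  ring

/-! ### Counting -/

lemma encard_le_two_of_no_three {α : Type*} {s : Set α}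
    (h : ∀ a ∈ s, ∀ b ∈ s, ∀ c ∈ s, a ≠ b → a ≠ c → b ≠ c → False) : s.encard ≤ 2 := by
  by_contra! hlt
  have h3 : (3 : ℕ∞) ≤ s.encard := by
    have := Order.add_one_le_of_lt hlt
    norm_num at this
    exact this
  obtain ⟨u, hu, hcard⟩ := Set.exists_subset_encard_eq h3
  obtain ⟨a, b, c, hab, hac, hbc, rfl⟩ := Set.encard_eq_three.1 hcard
  exact h a (hu (by simp)) b (hu (by simp)) c (hu (by simp)) hab hac hbc

/-- At most two shifts admit a solution. -/
lemma no_three_shifts {n : ℕ} [NeZero n] (hn : 3 ≤ n) {A C : Fin n → EuclideanSpace ℝ (Fin 2)}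
    {σ : ℝ} (hσ : ∀ i j : Fin n, j ≠ i → j ≠ i + 1 → 0 < σ * det2 (A i) (A (i + 1)) (A j))
    {a b c : Fin n} (ha : ∃ t l, IsSol A C a t l) (hb : ∃ t l, IsSol A C b t l)
    (hc : ∃ t l, IsSol A C c t l) (hab : a ≠ b) (hac : a ≠ c) (hbc : b ≠ c) : False := by
  have adj : ∀ {x y : Fin n}, (∃ t l, IsSol A C x t l) → (∃ t l, IsSol A C y t l) → x ≠ y →
      y = x + 1 ∨ x = y + 1 := by
    rintro x y ⟨_, _, hx⟩ ⟨_, _, hy⟩ hxy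
    exact shift_adjacent hn hσ hx hy hxy.symm
  have hn3 : n = 3 := by
    rcases adj ha hb hab with h1 | h1 <;> rcases adj ha hc hac with h2 | h2 <;>
      rcases adj hb hc hbc with h4 | h4
    · exact absurd (h1.trans h2.symm) hbc
    · exact absurd (h1.trans h2.symm) hbc
    · exact eq_three_of_add_three hn a (by rw [← h1, ← h4, ← h2])
    · exact absurd (add_right_cancel (h1.symm.trans h4)) hac
    · exact absurd (add_right_cancel (h2.symm.trans h4)) hab
    · exact eq_three_of_add_three hn a (by rw [← h2, ← h4, ← h1])
    · exact absurd (add_right_cancel (h1.symm.trans h2)) hbc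
    · exact absurd (add_right_cancel (h1.symm.trans h2)) hbc
  subst hn3
  refine triangle_not_all_shifts (C := C) hσ fun k => ?_
  have : k = a ∨ k = b ∨ k = c := by
    clear * - hab hac hbc
    revert a b c k
    decide
  rcases this with rfl | rfl | rfl
  · exact ha
  · exact hb
  · exact hc

/-- Theorem 2.3: at most 4 strictly convex `n`-gons can be inscribed into a given strictly
convex `n`-gon `A` and circumscribed around another given strictly convex `n`-gon `C`
(possibly with a shift `k` of the indices). -/
theorem card_inscribed_circumscribed_le_four
    (n : ℕ) [NeZero n] (hn : 3 ≤ n)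
    (A C : Fin n → EuclideanSpace ℝ (Fin 2))
    (hA : StrictConvexCyclicPolygon A) (hC : StrictConvexCyclicPolygon C) :
    {B : Fin n → EuclideanSpace ℝ (Fin 2) |
        (∀ i : Fin n, B i ∈ openSegment ℝ (A i) (A (i + 1))) ∧
        StrictConvexCyclicPolygon B ∧
        ∃ k : Fin n, ∀ i : Fin n,
          C i ∈ openSegment ℝ (B (k + i)) (B (k + i + 1))}.encard ≤ 4 := by
  obtain ⟨σ, hσ⟩ := exists_sign hA
  -- `V t` is the inscribed polygon with parameters `t`.
  let V : (Fin n → ℝ) → Fin n → EuclideanSpace ℝ (Fin 2) :=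
    fun t j => (1 - t j) • A j + t j • A (j + 1)
  let S : Fin n → Set (Fin n → EuclideanSpace ℝ (Fin 2)) :=
    fun k => {B | ∃ t l, IsSol A C k t l ∧ B = V t}
  let K : Set (Fin n) := {k | ∃ t l, IsSol A C k t l}
  have hS : ∀ k, (S k).encard ≤ 2 := by
    intro k
    refine encard_le_two_of_no_three ?_
    rintro _ ⟨t, lt, ht, rfl⟩ _ ⟨s, ls, hs, rfl⟩ _ ⟨r, lr, hr, rfl⟩ h1 h2 h3
    exact no_three_solutions hn hσ ht hs hr (fun e => h1 (e ▸ rfl)) (fun e => h2 (e ▸ rfl))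
      (fun e => h3 (e ▸ rfl))
  have hsub : {B : Fin n → EuclideanSpace ℝ (Fin 2) |
        (∀ i : Fin n, B i ∈ openSegment ℝ (A i) (A (i + 1))) ∧
        StrictConvexCyclicPolygon B ∧
        ∃ k : Fin n, ∀ i : Fin n,
          C i ∈ openSegment ℝ (B (k + i)) (B (k + i + 1))} ⊆ ⋃ k ∈ K, S k := by
    rintro B ⟨hB, -, k, hC'⟩
    choose a t ha ht hat hBt using hB
    choose l b hl hb hlb hCl using hC'
    have ea : ∀ j, a j = 1 - t j := fun j => by linarith [hat j]
    have eb : ∀ i, b i = 1 - l i := fun i => by linarith [hlb i]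
    have hsol : IsSol A C k t l := by
      refine ⟨fun j => ⟨ht j, by linarith [ha j, hat j]⟩,
        fun i => ⟨hl i, by linarith [hb i, hlb i]⟩, fun i c => ?_⟩
      rw [← hCl i, ← hBt, ← hBt, ea, ea, eb]
      simp only [PiLp.add_apply, PiLp.smul_apply, smul_eq_mul]
    refine Set.mem_biUnion (show k ∈ K from ⟨t, l, hsol⟩) ⟨t, l, hsol, ?_⟩
    funext j
    rw [← hBt j, ea]
  refine (Set.encard_le_encard hsub).trans ?_
  have hpair : ∃ x y, K ⊆ {x, y} := by
    by_contra! hcon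
    obtain ⟨x, hx, -⟩ := Set.not_subset.1 (hcon 0 0)
    obtain ⟨y, hy, hyx⟩ := Set.not_subset.1 (hcon x x)
    obtain ⟨z, hz, hzxy⟩ := Set.not_subset.1 (hcon x y)
    simp only [Set.mem_insert_iff, Set.mem_singleton_iff, or_self, not_or] at hyx hzxy
    exact no_three_shifts hn hσ hx hy hz (Ne.symm hyx) (Ne.symm hzxy.1) (Ne.symm hzxy.2)
  obtain ⟨x, y, hxy⟩ := hpair
  have hsub2 : (⋃ k ∈ K, S k) ⊆ S x ∪ S y := by
    refine Set.iUnion₂_subset fun k hk => ?_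
    rcases hxy hk with rfl | rfl
    · exact Set.subset_union_left
    · exact Set.subset_union_right
  calc _ ≤ (S x ∪ S y).encard := Set.encard_le_encard hsub2
    _ ≤ (S x).encard + (S y).encard := Set.encard_union_le _ _
    _ ≤ 2 + 2 := add_le_add (hS x) (hS y)
    _ = 4 := by norm_num
end

section
/- Let n ≥ 3 and let A : Fin n → ℝ² be a strictly convex polygon in cyclic order and C : Fin n → ℝ² any tuple of points. Then the set of tuples B : Fin n → ℝ² such that (i) for every i, B i lies strictly between A i and A (i+1) (indices mod n), (ii) B is a strictly convex polygon in cyclic order, and (iii) for every i, C i lies strictly between B i and B (i+1) (indices mod n, with no index shift), has at most 2 elements. -/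
/-- `t` is a sequence with `(α k - t k) * (t (k+1) - β k) = γ k` on the branch `t k < α k`: every
term is obtained from the previous one by a fixed branch of a hyperbola.  It is `n`-periodic at
`0`, in the sense that `t n = t 0`. -/
def IsHyperbolicCycle (n : ℕ) (α β γ t : ℕ → ℝ) : Prop :=
  (∀ k, 0 < α k - t k ∧ (α k - t k) * (t (k + 1) - β k) = γ k) ∧ t n = t 0

/-- The hyperbola `Y = β + γ / (α - t)` is increasing for `t < α`. -/
lemma hyperbola_lt {α β γ p q p' q' : ℝ} (hγ : 0 < γ)
    (hp : 0 < α - p) (hp' : (α - p) * (p' - β) = γ)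
    (hq : 0 < α - q) (hq' : (α - q) * (q' - β) = γ) (h : p < q) : p' < q' := by
  have e1 : p' = β + γ / (α - p) := by field_simp; linarith
  have e2 : q' = β + γ / (α - q) := by field_simp; linarith
  rw [e1, e2]
  gcongr

/-- Strict convexity of the hyperbola `Y = β + γ / (α - t)` on `t < α`, in terms of the ratio of
consecutive differences. -/
lemma ratio_step_s2 {α β γ p q r p' q' r' : ℝ} (hγ : 0 < γ)
    (hp : 0 < α - p) (hp' : (α - p) * (p' - β) = γ)
    (hq : 0 < α - q) (hq' : (α - q) * (q' - β) = γ)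
    (hr : 0 < α - r) (hr' : (α - r) * (r' - β) = γ)
    (hpq : p < q) (hqr : q < r) :
    (q' - p') / (r' - q') < (q - p) / (r - q) := by
  have h2 : 0 < r - q := sub_pos.2 hqr
  have h1 : 0 < q - p := sub_pos.2 hpq
  have e1 : p' = β + γ / (α - p) := by field_simp; linarith
  have e2 : q' = β + γ / (α - q) := by field_simp; linarith
  have e3 : r' = β + γ / (α - r) := by field_simp; linarith
  have d1 : q' - p' = γ * (q - p) / ((α - p) * (α - q)) := by
    rw [e1, e2]; field_simp; ring
  have d2 : r' - q' = γ * (r - q) / ((α - q) * (α - r)) := by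
    rw [e2, e3]; field_simp; ring
  have key : (q' - p') / (r' - q') = (q - p) / (r - q) * ((α - r) / (α - p)) := by
    rw [d1, d2]; field_simp
  rw [key]
  refine mul_lt_of_lt_one_right (div_pos h1 h2) ?_
  rw [div_lt_one hp]
  linarith

lemma IsHyperbolicCycle.lt {n : ℕ} {α β γ p q : ℕ → ℝ} (hγ : ∀ k, 0 < γ k)
    (hp : IsHyperbolicCycle n α β γ p) (hq : IsHyperbolicCycle n α β γ q)
    (h : p 0 < q 0) (k : ℕ) : p k < q k := by
  induction k with
  | zero => exact h
  | succ k ih =>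
    exact hyperbola_lt (hγ k) (hp.1 k).1 (hp.1 k).2 (hq.1 k).1 (hq.1 k).2 ih

lemma IsHyperbolicCycle.eq {n : ℕ} {α β γ p q : ℕ → ℝ}
    (hp : IsHyperbolicCycle n α β γ p) (hq : IsHyperbolicCycle n α β γ q)
    (h : p 0 = q 0) (k : ℕ) : p k = q k := by
  induction k with
  | zero => exact h
  | succ k ih =>
    have h1 := hp.1 k
    have h2 := hq.1 k
    rw [ih] at h1
    have := mul_left_cancel₀ h1.1.ne' (h1.2.trans h2.2.symm)
    linarith

lemma no_three_ordered_s2 {n : ℕ} (hn : 0 < n) {α β γ p q r : ℕ → ℝ} (hγ : ∀ k, 0 < γ k)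
    (hp : IsHyperbolicCycle n α β γ p) (hq : IsHyperbolicCycle n α β γ q)
    (hr : IsHyperbolicCycle n α β γ r) (hpq : p 0 < q 0) (hqr : q 0 < r 0) : False := by
  have hanti : StrictAnti fun k => (q k - p k) / (r k - q k) :=
    strictAnti_nat_of_succ_lt fun k =>
      ratio_step_s2 (hγ k) (hp.1 k).1 (hp.1 k).2 (hq.1 k).1 (hq.1 k).2 (hr.1 k).1 (hr.1 k).2
        (hp.lt hγ hq hpq k) (hq.lt hγ hr hqr k)
  have := hanti hn
  simp only [hp.2, hq.2, hr.2] at this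
  exact lt_irrefl _ this

/-- The coordinates of a point `Z` of the segment `X Y` in the frame `(A - Q, R - Q)` at the corner `Q`, as
given by Cramer's rule, where `X` and `Y` lie on the lines `A Q` and `Q R`. -/
lemma corner_coords {A Q R X Y Z : EuclideanSpace ℝ (Fin 2)} {t t' s : ℝ}
    (hD : (A 0 - Q 0) * (R 1 - Q 1) - (A 1 - Q 1) * (R 0 - Q 0) ≠ 0)
    (hX : (1 - t) • A + t • Q = X) (hY : (1 - t') • Q + t' • R = Y)
    (hZ : (1 - s) • X + s • Y = Z) :
    ((Z 0 - Q 0) * (R 1 - Q 1) - (Z 1 - Q 1) * (R 0 - Q 0)) /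
        ((A 0 - Q 0) * (R 1 - Q 1) - (A 1 - Q 1) * (R 0 - Q 0)) = (1 - s) * (1 - t) ∧
      ((A 0 - Q 0) * (Z 1 - Q 1) - (A 1 - Q 1) * (Z 0 - Q 0)) /
        ((A 0 - Q 0) * (R 1 - Q 1) - (A 1 - Q 1) * (R 0 - Q 0)) = s * t' := by
  subst hX hY hZ
  constructor <;>
  · rw [div_eq_iff hD]
    simp only [PiLp.add_apply, PiLp.smul_apply, smul_eq_mul]
    ring

/-- Consecutive sides of a strictly convex polygon with at least three vertices are not
parallel. -/
lemma corner_det_ne_zero {n : ℕ} [NeZero n] (hn : 3 ≤ n) {A : Fin n → EuclideanSpace ℝ (Fin 2)}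
    (hA : StrictConvexCyclicPolygon A) (i : Fin n) :
    (A i 0 - A (i + 1) 0) * (A (i + 1 + 1) 1 - A (i + 1) 1)
      - (A i 1 - A (i + 1) 1) * (A (i + 1 + 1) 0 - A (i + 1) 0) ≠ 0 := by
  have hone : (1 : Fin n) ≠ 0 := by
    intro h
    have := congrArg Fin.val h
    rw [Fin.val_one', Fin.val_zero, Nat.mod_eq_of_lt (by omega)] at this
    omega
  have htwo : (1 + 1 : Fin n) ≠ 0 := by
    intro h
    have := congrArg Fin.val h
    rw [Fin.val_add, Fin.val_one', Fin.val_zero, Nat.mod_eq_of_lt (by omega : 1 < n),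
      Nat.mod_eq_of_lt (by omega)] at this
    omega
  have h1 : i + 1 + 1 ≠ i := by
    rw [add_assoc]; simpa using htwo
  have h2 : i + 1 + 1 ≠ i + 1 := by simpa using hone
  intro h0
  rcases hA with hA | hA
  · have := hA i _ h1 h2
    unfold Ccw at this
    nlinarith
  · have := hA i _ h1 h2
    unfold Ccw at this
    nlinarith

/-- The key step of Theorem 2.3: for a fixed incidence pattern (no index shift), at most 2
strictly convex `n`-gons `B` are inscribed into the strictly convex `n`-gon `A`
(with `B i` strictly between `A i` and `A (i+1)`) and circumscribed around the tuple `C`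
(with `C i` strictly between `B i` and `B (i+1)`). -/
theorem card_inscribed_circumscribed_fixed_pattern_le_two
    (n : ℕ) [NeZero n] (hn : 3 ≤ n)
    (A : Fin n → EuclideanSpace ℝ (Fin 2)) (hA : StrictConvexCyclicPolygon A)
    (C : Fin n → EuclideanSpace ℝ (Fin 2)) :
    {B : Fin n → EuclideanSpace ℝ (Fin 2) |
        (∀ i : Fin n, B i ∈ openSegment ℝ (A i) (A (i + 1))) ∧
        StrictConvexCyclicPolygon B ∧
        ∀ i : Fin n, C i ∈ openSegment ℝ (B i) (B (i + 1))}.encard ≤ 2 := by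
  have hsucc : ∀ k : ℕ, Fin.ofNat n (k + 1) = Fin.ofNat n k + 1 := fun k => by
    ext; simp [Fin.val_add]
  have hval : ∀ i : Fin n, Fin.ofNat n i.val = i := fun i => by
    ext; simp
  by_contra hcon
  rw [not_le] at hcon
  obtain ⟨T, hTS, hT⟩ := Set.exists_subset_encard_eq (Order.add_one_le_of_lt hcon)
  obtain ⟨B₁, B₂, B₃, h12, h13, h23, rfl⟩ := Set.encard_eq_three.1 (hT.trans (by norm_num))
  -- the coordinates of `C i` in the frame at the corner `A (i + 1)`
  let D : Fin n → ℝ := fun i =>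
    (A i 0 - A (i + 1) 0) * (A (i + 1 + 1) 1 - A (i + 1) 1)
      - (A i 1 - A (i + 1) 1) * (A (i + 1 + 1) 0 - A (i + 1) 0)
  let a : Fin n → ℝ := fun i =>
    ((C i 0 - A (i + 1) 0) * (A (i + 1 + 1) 1 - A (i + 1) 1)
      - (C i 1 - A (i + 1) 1) * (A (i + 1 + 1) 0 - A (i + 1) 0)) / D i
  let b : Fin n → ℝ := fun i =>
    ((A i 0 - A (i + 1) 0) * (C i 1 - A (i + 1) 1)
      - (A i 1 - A (i + 1) 1) * (C i 0 - A (i + 1) 0)) / D i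
  have key : ∀ B : Fin n → EuclideanSpace ℝ (Fin 2),
      (∀ i, B i ∈ openSegment ℝ (A i) (A (i + 1))) →
      (∀ i, C i ∈ openSegment ℝ (B i) (B (i + 1))) →
      (∀ i, 0 < a i * b i) ∧ ∃ t : Fin n → ℝ,
        (∀ i, (1 - t i) • A i + t i • A (i + 1) = B i) ∧
        IsHyperbolicCycle n (fun k => 1 - a (Fin.ofNat n k)) (fun k => b (Fin.ofNat n k))
          (fun k => a (Fin.ofNat n k) * b (Fin.ofNat n k)) (fun k => t (Fin.ofNat n k)) := by
    intro B hB hC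
    simp only [openSegment_eq_image, Set.mem_image, Set.mem_Ioo] at hB hC
    choose t ht htB using hB
    choose s hs hsC using hC
    have hab : ∀ i, a i = (1 - s i) * (1 - t i) ∧ b i = s i * t (i + 1) := fun i =>
      corner_coords (corner_det_ne_zero hn hA i) (htB i) (htB (i + 1)) (hsC i)
    refine ⟨fun i => ?_, t, htB, fun k => ?_, ?_⟩
    · rw [(hab i).1, (hab i).2]
      have h1 := sub_pos.2 (ht i).2
      have h2 := sub_pos.2 (hs i).2
      have h3 := (ht (i + 1)).1
      have h4 := (hs i).1
      positivity
    · simp only [hsucc]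
      rw [(hab _).1, (hab _).2]
      constructor
      · nlinarith [mul_pos (hs (Fin.ofNat n k)).1 (sub_pos.2 (ht (Fin.ofNat n k)).2)]
      · ring
    · simp [Fin.ofNat]
  obtain ⟨hB₁, -, hC₁⟩ := hTS (show B₁ ∈ _ by simp)
  obtain ⟨hB₂, -, hC₂⟩ := hTS (show B₂ ∈ _ by simp)
  obtain ⟨hB₃, -, hC₃⟩ := hTS (show B₃ ∈ _ by simp)
  obtain ⟨hpos, t₁, ht₁, c₁⟩ := key B₁ hB₁ hC₁
  obtain ⟨-, t₂, ht₂, c₂⟩ := key B₂ hB₂ hC₂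
  obtain ⟨-, t₃, ht₃, c₃⟩ := key B₃ hB₃ hC₃
  have hγ : ∀ k : ℕ, 0 < a (Fin.ofNat n k) * b (Fin.ofNat n k) := fun k => hpos _
  have hn0 : 0 < n := by omega
  -- distinct polygons have distinct first parameters
  have hne : ∀ {B B' : Fin n → EuclideanSpace ℝ (Fin 2)} {t t' : Fin n → ℝ}, B ≠ B' →
      (∀ i, (1 - t i) • A i + t i • A (i + 1) = B i) →
      (∀ i, (1 - t' i) • A i + t' i • A (i + 1) = B' i) →
      IsHyperbolicCycle n (fun k => 1 - a (Fin.ofNat n k)) (fun k => b (Fin.ofNat n k))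
          (fun k => a (Fin.ofNat n k) * b (Fin.ofNat n k)) (fun k => t (Fin.ofNat n k)) →
      IsHyperbolicCycle n (fun k => 1 - a (Fin.ofNat n k)) (fun k => b (Fin.ofNat n k))
          (fun k => a (Fin.ofNat n k) * b (Fin.ofNat n k)) (fun k => t' (Fin.ofNat n k)) →
      t (Fin.ofNat n 0) ≠ t' (Fin.ofNat n 0) := by
    intro B B' t t' hBB h h' c c' h0
    apply hBB
    funext i
    have := c.eq c' h0 i.val
    simp only [hval] at this
    rw [← h i, ← h' i, this]
  rcases lt_or_gt_of_ne (hne h12 ht₁ ht₂ c₁ c₂) with l12 | l12 <;>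
  rcases lt_or_gt_of_ne (hne h13 ht₁ ht₃ c₁ c₃) with l13 | l13 <;>
  rcases lt_or_gt_of_ne (hne h23 ht₂ ht₃ c₂ c₃) with l23 | l23
  · exact no_three_ordered_s2 hn0 hγ c₁ c₂ c₃ l12 l23
  · exact no_three_ordered_s2 hn0 hγ c₁ c₃ c₂ l13 l23
  · exact lt_asymm (l12.trans l23) l13
  · exact no_three_ordered_s2 hn0 hγ c₃ c₁ c₂ l13 l12
  · exact no_three_ordered_s2 hn0 hγ c₂ c₁ c₃ l12 l13
  · exact lt_asymm (l13.trans l23) l12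
  · exact no_three_ordered_s2 hn0 hγ c₂ c₃ c₁ l23 l13
  · exact no_three_ordered_s2 hn0 hγ c₃ c₂ c₁ l23 l12
end

section
/- Let n ≥ 4 and let A : Fin n → ℝ² be a strictly convex polygon in cyclic order. For each i (indices mod n) define M i = interior(convexHull{A i, A (i+1), A (i+2)}) ∩ interior(convexHull{A (i−1), A i, A (i+1)}). Then the sets M 0, M 1, …, M (n−1) are pairwise disjoint. -/
/-- Twice the signed area of the triangle `P Q X`. -/
def area (P Q X : EuclideanSpace ℝ (Fin 2)) : ℝ :=
  (Q 0 - P 0) * (X 1 - P 1) - (Q 1 - P 1) * (X 0 - P 0)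

lemma area_swap (P Q X : EuclideanSpace ℝ (Fin 2)) : area Q P X = -area P Q X := by
  unfold area; ring

lemma area_swap_right (P Q X : EuclideanSpace ℝ (Fin 2)) : area P X Q = -area P Q X := by
  unfold area; ring

/-- The closed half-plane on one side of the line `P Q`; the sign of `s` selects the side. -/
lemma convex_halfPlane (s : ℝ) (P Q : EuclideanSpace ℝ (Fin 2)) :
    Convex ℝ {X | 0 ≤ s * area P Q X} := by
  intro X hX Y hY a b ha hb hab
  simp only [Set.mem_ofPred_eq] at *
  have : s * area P Q (a • X + b • Y) = a * (s * area P Q X) + b * (s * area P Q Y) := by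
    obtain rfl : b = 1 - a := by linarith
    simp [area]; ring
  rw [this]; positivity

lemma interior_line_eq_empty {P Q : EuclideanSpace ℝ (Fin 2)} (h : P ≠ Q)
    {U : Set (EuclideanSpace ℝ (Fin 2))} (hU : IsOpen U) (h0 : ∀ X ∈ U, area P Q X = 0) :
    U = ∅ := by
  rw [Set.eq_empty_iff_forall_notMem]
  intro X hX
  -- Moving from `X` along the normal of the line changes `area P Q`.
  let v : EuclideanSpace ℝ (Fin 2) := !₂[-(Q 1 - P 1), Q 0 - P 0]
  have hc : Continuous fun t : ℝ => X + t • v := by fun_prop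
  have hn : ∀ᶠ t in nhds (0 : ℝ), X + t • v ∈ U :=
    hc.continuousAt.eventually_mem (hU.mem_nhds (by simpa using hX))
  obtain ⟨ε, hε, hb⟩ := Metric.eventually_nhds_iff.1 hn
  have h1 := h0 _ (hb (y := ε / 2) (by rw [Real.dist_eq, sub_zero, abs_of_pos] <;> linarith))
  have h2 := h0 _ hX
  have h3 : ε / 2 * ((Q 0 - P 0) ^ 2 + (Q 1 - P 1) ^ 2) = 0 := by
    simp [area, v] at h1 h2
    linarith
  have h4 : (Q 0 - P 0) ^ 2 + (Q 1 - P 1) ^ 2 = 0 := by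
    rcases mul_eq_zero.1 h3 with h | h
    · linarith
    · exact h
  apply h
  ext t
  fin_cases t
  · simp only [Fin.zero_eta]; nlinarith [sq_nonneg (Q 0 - P 0), sq_nonneg (Q 1 - P 1)]
  · simp only [Fin.mk_one]; nlinarith [sq_nonneg (Q 0 - P 0), sq_nonneg (Q 1 - P 1)]

/-- A point `X` strictly inside the angle at `Q` of the triangle `P Q R` is weakly separated from
`Q` by the line `P R`, as soon as some line `X Y` has the triangle on one side, with `R` off the line. -/
lemma area_nonneg_of_supporting {s : ℝ} {P Q R X Y : EuclideanSpace ℝ (Fin 2)}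
    (hPQ : 0 < s * area P Q X) (hQR : 0 < s * area Q R X)
    (hP : 0 ≤ s * area X Y P) (hQ : 0 ≤ s * area X Y Q) (hR : 0 < s * area X Y R) :
    0 ≤ s * area P R X := by
  by_contra! h
  -- Barycentric coordinates of `X` with respect to `P Q R`, scaled by the area of the triangle.
  have key : (s * area Q R X) * (s * area X Y P) + (-(s * area P R X)) * (s * area X Y Q)
      + (s * area P Q X) * (s * area X Y R) = 0 := by
    unfold area; ring
  have h1 := mul_nonneg hQR.le hP
  have h2 := mul_nonneg (neg_pos.2 h).le hQ
  have h3 := mul_pos hPQ hR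
  linarith

section Polygon

variable {n : ℕ} [NeZero n] {A : Fin n → EuclideanSpace ℝ (Fin 2)} {s : ℝ}

/-- The diagonal cutting off `A k` has all the other vertices on its inner side. The sign of `s`
is the orientation of the polygon. -/
lemma diagonal_nonneg (hA : ∀ i j : Fin n, j ≠ i → j ≠ i + 1 → 0 < s * area (A i) (A (i + 1)) (A j))
    {k m : Fin n} (hm : m ≠ k) : 0 ≤ s * area (A (k - 1)) (A (k + 1)) (A m) := by
  by_cases h1 : m = k - 1
  · subst h1; apply le_of_eq; unfold area; ring
  by_cases h2 : m = k + 1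
  · subst h2; apply le_of_eq; unfold area; ring
  have e : ∀ x y : Fin n, x = y + 1 → y = x - 1 := fun x y h => by rw [h, add_sub_cancel_right]
  have hPQ := hA (k - 1) m h1 (by rwa [sub_add_cancel])
  rw [sub_add_cancel] at hPQ
  refine area_nonneg_of_supporting (Y := A (m + 1)) hPQ (hA k m hm h2) ?_ ?_ ?_
  · by_cases h : k - 1 = m + 1
    · rw [h]; apply le_of_eq; unfold area; ring
    · exact (hA m _ (Ne.symm h1) h).le
  · exact (hA m k hm.symm fun h => h1 (e _ _ h)).le
  · exact hA m _ (Ne.symm h2) fun h => hm (add_right_cancel h).symm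

/-- Ears at vertices that are neither equal nor adjacent have disjoint interiors. -/
lemma disjoint_ears (h2 : (1 : Fin n) + 1 ≠ 0)
    (hA : ∀ i j : Fin n, j ≠ i → j ≠ i + 1 → 0 < s * area (A i) (A (i + 1)) (A j))
    {k l : Fin n} (hl : l ≠ k) (hl1 : l ≠ k - 1) (hl2 : l ≠ k + 1) :
    Disjoint (interior (convexHull ℝ {A (k - 1), A k, A (k + 1)}))
      (interior (convexHull ℝ {A (l - 1), A l, A (l + 1)})) := by
  have hk1 : k + 1 ≠ k - 1 := fun h => h2 <| by
    have : k + (1 + 1) = k := by rw [← add_assoc, h, sub_add_cancel]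
    simpa using this
  have hk : k + 1 ≠ k := fun h => by
    have : (1 : Fin n) = 0 := by simpa using h
    simp [this] at h2
  have hear : 0 < s * area (A (k - 1)) (A k) (A (k + 1)) := by
    simpa using hA (k - 1) (k + 1) hk1 (by simpa using hk)
  have hout : ∀ X ∈ convexHull ℝ {A (k - 1), A k, A (k + 1)},
      0 ≤ -s * area (A (k - 1)) (A (k + 1)) X := by
    refine fun X hX => convexHull_min ?_ (convex_halfPlane _ _ _) hX
    rintro Y (rfl | rfl | rfl)
    · rw [Set.mem_ofPred_eq]; apply le_of_eq; unfold area; ring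
    · rw [Set.mem_ofPred_eq, area_swap_right, neg_mul_neg]
      exact hear.le
    · rw [Set.mem_ofPred_eq]; apply le_of_eq; unfold area; ring
  have hin : ∀ X ∈ convexHull ℝ {A (l - 1), A l, A (l + 1)},
      0 ≤ s * area (A (k - 1)) (A (k + 1)) X := by
    refine fun X hX => convexHull_min ?_ (convex_halfPlane _ _ _) hX
    rintro Y (rfl | rfl | rfl)
    · exact diagonal_nonneg hA fun h => hl2 (by rw [← h, sub_add_cancel])
    · exact diagonal_nonneg hA hl
    · exact diagonal_nonneg hA fun h => hl1 (by rw [← h, add_sub_cancel_right])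
  rw [Set.disjoint_iff_inter_eq_empty]
  refine interior_line_eq_empty (P := A (k - 1)) (Q := A (k + 1)) ?_
    (isOpen_interior.inter isOpen_interior) ?_
  · intro h
    rw [h] at hear
    exact hear.ne' (by unfold area; ring)
  · rintro X ⟨h3, h4⟩
    have h5 := hout X (interior_subset h3)
    have h6 := hin X (interior_subset h4)
    have h7 : s * area (A (k - 1)) (A (k + 1)) X = 0 := by linarith
    refine (mul_eq_zero.1 h7).resolve_left ?_
    rintro rfl
    simp at hear

end Polygon

/-- Disjointness of the regions `M i` in the proof of Theorem 2.3: for a strictly convex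
`n`-gon with `n ≥ 4`, the sets
`M i = interior (convexHull {A i, A (i+1), A (i+2)}) ∩ interior (convexHull {A (i-1), A i, A (i+1)})`
are pairwise disjoint. -/
theorem regions_pairwise_disjoint
    (n : ℕ) [NeZero n] (hn : 4 ≤ n)
    (A : Fin n → EuclideanSpace ℝ (Fin 2)) (hA : StrictConvexCyclicPolygon A)
    (M : Fin n → Set (EuclideanSpace ℝ (Fin 2)))
    (hM : ∀ i : Fin n, M i =
        interior (convexHull ℝ ({A i, A (i + 1), A (i + 2)} : Set (EuclideanSpace ℝ (Fin 2)))) ∩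
        interior (convexHull ℝ ({A (i - 1), A i, A (i + 1)} : Set (EuclideanSpace ℝ (Fin 2))))) :
    Pairwise fun i j : Fin n => Disjoint (M i) (M j) := by
  obtain ⟨s, hs⟩ : ∃ s : ℝ, ∀ i j : Fin n, j ≠ i → j ≠ i + 1 →
      0 < s * area (A i) (A (i + 1)) (A j) := by
    rcases hA with h | h
    · exact ⟨1, fun i j h1 h2 => by rw [one_mul]; exact h i j h1 h2⟩
    · refine ⟨-1, fun i j h1 h2 => ?_⟩
      rw [neg_one_mul, ← area_swap]
      exact h i j h1 h2
  have one_ne : (1 : Fin n) ≠ 0 := by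
    simp [Fin.ext_iff, Nat.mod_eq_of_lt (show 1 < n by omega)]
  have two_eq : (2 : Fin n) = 1 + 1 := by
    apply Fin.ext; simp [Fin.val_add]
  have two_ne : (1 : Fin n) + 1 ≠ 0 := by
    simp [Fin.ext_iff, Fin.val_add, Nat.mod_eq_of_lt (show 2 < n by omega)]
  have three_ne : (1 : Fin n) + 1 + 1 ≠ 0 := by
    simp [Fin.ext_iff, Fin.val_add, Nat.mod_eq_of_lt (show 3 < n by omega)]
  have hM0 : ∀ i, M i ⊆ interior (convexHull ℝ {A (i - 1), A i, A (i + 1)}) := fun i => by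
    rw [hM]; exact Set.inter_subset_right
  have hM1 : ∀ i, M i ⊆
      interior (convexHull ℝ {A (i + 1 - 1), A (i + 1), A (i + 1 + 1)}) := fun i => by
    rw [hM, two_eq, ← add_assoc, add_sub_cancel_right]; exact Set.inter_subset_left
  have hadj : ∀ i, Disjoint (M i) (M (i + 1)) := fun i => by
    refine (disjoint_ears two_ne hs ?_ ?_ ?_).mono (hM0 i) (hM1 (i + 1))
    · intro h; rw [add_assoc, add_eq_left] at h; exact two_ne h
    · intro h
      rw [eq_sub_iff_add_eq, add_assoc, add_assoc, add_eq_left, ← add_assoc] at h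
      exact three_ne h
    · intro h; rw [add_eq_left] at h; exact one_ne h
  intro i j hij
  by_cases h1 : j = i + 1
  · subst h1; exact hadj i
  by_cases h2 : j = i - 1
  · have h3 := (hadj j).symm
    rwa [h2, sub_add_cancel, ← h2] at h3
  exact (disjoint_ears two_ne hs hij.symm h2 h1).mono (hM0 i) (hM0 j)
end

section
/- Let n ≥ 3 be an integer, a > 0 a real number, and define f(x) = x(a−x)·sin(2π/n) / (2a − 2x·sin²(π/n)). Set x₀ = a/(1+cos(π/n)). Then for every x ∈ (0, a), f(x) = f(x₀) implies x = x₀. -/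
/-!
Write `c = cos (π / n)`, so that `a = x₀ (1 + c)` and `sin² (π / n) = 1 - c²`. After cancelling
`sin (2π / n) ≠ 0` and clearing the positive denominators, the difference of the two sides of
`f x = f x₀` is, up to a nonzero constant factor, `c x₀ (1 + c) (x - x₀)²`. For `n ≥ 3` the angle
`π / n` lies in `(0, π / 2)`, so `c > 0` and the equation forces `x = x₀`.
-/

open Real

/-- Appendix A: for `x₀ = a/(1+cos(π/n))`, the value `f(x₀)` of
`f(x) = x(a−x)·sin(2π/n) / (2a − 2x·sin²(π/n))` is attained on `(0, a)` only at `x₀`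
(the corresponding quadratic has a double root at `x₀`). -/
theorem example_one_double_root
    (n : ℕ) (hn : 3 ≤ n) (a : ℝ) (ha : 0 < a)
    (f : ℝ → ℝ)
    (hf : ∀ x : ℝ, f x =
        x * (a - x) * sin (2 * π / n) / (2 * a - 2 * x * sin (π / n) ^ 2))
    (x₀ : ℝ) (hx₀ : x₀ = a / (1 + cos (π / n))) :
    ∀ x ∈ Set.Ioo (0 : ℝ) a, f x = f x₀ → x = x₀ := by
  rintro x ⟨hx0, hxa⟩ h
  have hn' : (3 : ℝ) ≤ n := by exact_mod_cast hn
  have hpos : 0 < π / n := by positivity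
  have hlt : π / n < π / 2 := div_lt_div_of_pos_left pi_pos (by norm_num) (by linarith)
  have hc : 0 < cos (π / n) := cos_pos_of_mem_Ioo ⟨by linarith, hlt⟩
  have hs : 0 < sin (2 * π / n) := by
    rw [mul_div_assoc]
    exact sin_pos_of_pos_of_lt_pi (by linarith) (by linarith)
  rw [hf, hf, sin_sq] at h
  generalize cos (π / n) = c at *
  generalize sin (2 * π / n) = s at *
  have hx₀pos : 0 < x₀ := by rw [hx₀]; positivity
  have hax₀ : a = x₀ * (1 + c) := by rw [hx₀]; field_simp
  -- Both denominators are positive: `y (1 - c²) < a` whenever `0 < y < a`.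
  have hden : ∀ y, 0 < y → y < a → 0 < 2 * a - 2 * y * (1 - c ^ 2) := by
    intro y hy hya
    have : 0 < y * c ^ 2 := by positivity
    linarith
  have hx₀a : x₀ < a := by
    have : 0 < x₀ * c := by positivity
    linarith
  rw [div_eq_div_iff (hden x hx0 hxa).ne' (hden x₀ hx₀pos hx₀a).ne'] at h
  subst hax₀
  have key : (2 * s * c * x₀ * (1 + c)) * (x - x₀) ^ 2 = 0 := by linear_combination -h
  have hk : 2 * s * c * x₀ * (1 + c) ≠ 0 := by positivity
  exact sub_eq_zero.mp (pow_eq_zero_iff two_ne_zero |>.mp ((mul_eq_zero.mp key).resolve_left hk))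
end

section
/- Let n ≥ 3 be an integer and let s = sin²(π/n) and S = sin(2π/n). Let a, x be real numbers with x ≠ 0, 1 − 2xs ≠ 0 and 1 − 2as ≠ 0, and set y = (a−x)/(1−2xs). Assume y ≠ 0 and 1 − 2ys ≠ 0. Define g(u) = (a−u)·S / (1/u − 2s). Then g(y) = g(x). -/
open Real

/-- The relation gives `a - u = v * (1 - 2 * u * s)`, so the denominator cancels. Since the
relation and the value `u * v * S` are both symmetric in `u` and `v`, the quotient takes the same
value at `u` and at `v`. -/
theorem quotient_eq_mul_of_relation {s S a u v : ℝ} (hu : u ≠ 0) (hus : 1 - 2 * u * s ≠ 0)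
    (h : u + v - 2 * u * v * s = a) :
    (a - u) * S / (1 / u - 2 * s) = u * v * S := by
  have hden : 1 / u - 2 * s = (1 - 2 * u * s) / u := by field_simp
  have hden0 : 1 / u - 2 * s ≠ 0 := hden ▸ div_ne_zero hus hu
  rw [div_eq_iff hden0, hden, ← h]
  field_simp
  ring

/-- Example 2: with `s = sin²(π/n)`, `S = sin(2π/n)`, and `g(u) = (a−u)·S/(1/u − 2s)`,
the point `y = (a−x)/(1−2xs)` satisfies `g(y) = g(x)`. -/
theorem example_two_second_solution
    (n : ℕ) (hn : 3 ≤ n) (s S a x y : ℝ)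
    (hs : s = sin (π / n) ^ 2) (hS : S = sin (2 * π / n))
    (hx : x ≠ 0) (hxs : 1 - 2 * x * s ≠ 0) (has : 1 - 2 * a * s ≠ 0)
    (hy : y = (a - x) / (1 - 2 * x * s))
    (hy0 : y ≠ 0) (hys : 1 - 2 * y * s ≠ 0)
    (g : ℝ → ℝ)
    (hg : ∀ u : ℝ, g u = (a - u) * S / (1 / u - 2 * s)) :
    g y = g x := by
  have h : x + y - 2 * x * y * s = a := by
    rw [eq_div_iff hxs] at hy
    linarith
  rw [hg, hg, quotient_eq_mul_of_relation hx hxs h,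
    quotient_eq_mul_of_relation (v := x) hy0 hys (by linarith)]
  ring
end

section
/- Let n, m ≥ 3 be integers with n ≠ m. Then there do not exist real numbers x, y, z, t > 0 and real numbers a, a′ such that a = x + y − 2xy·sin²(π/n), 1 − a = z + t − 2zt·sin²(π/n), a′ = x + y − 2xy·sin²(π/m), and 1 − a′ = z + t − 2zt·sin²(π/m). -/
/-!
Adding the two equations for the `n`-gon eliminates `a` and gives
`1 = x + y + z + t - 2 (x y + z t) sin² (π / n)`; likewise for the `m`-gon. Subtracting,
`(x y + z t) (sin² (π / n) - sin² (π / m)) = 0`. The first factor is positive, and the second is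
nonzero because `sin` is injective and nonnegative on `[0, π / 2]`, which contains both angles.
-/

open Real

lemma sin_sq_pi_div_injective {n m : ℕ} (hn : 3 ≤ n) (hm : 3 ≤ m)
    (h : sin (π / n) ^ 2 = sin (π / m) ^ 2) : n = m := by
  have key : ∀ k : ℕ, 3 ≤ k → 0 < π / k ∧ π / k ≤ π / 2 := by
    intro k hk
    have hk' : (3 : ℝ) ≤ k := by exact_mod_cast hk
    have hpi := pi_pos
    exact ⟨by positivity, by gcongr; linarith⟩
  obtain ⟨n0, n1⟩ := key n hn
  obtain ⟨m0, m1⟩ := key m hm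
  have hs : sin (π / n) = sin (π / m) :=
    (sq_eq_sq₀ (sin_nonneg_of_nonneg_of_le_pi n0.le (by linarith))
      (sin_nonneg_of_nonneg_of_le_pi m0.le (by linarith))).mp h
  have ha : π / n = π / m :=
    injOn_sin ⟨by linarith, n1⟩ ⟨by linarith, m1⟩ hs
  have hc : (n : ℝ) = m := by
    rw [div_eq_div_iff (by positivity) (by positivity)] at ha
    exact (mul_left_cancel₀ pi_ne_zero ha).symm
  exact_mod_cast hc

/-- Example 2 (impossibility): the same positive cutting parameters `x, y, z, t` (with unit
side length) cannot work simultaneously for a regular `n`-gon and a regular `m`-gon with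
`n ≠ m`. -/
theorem example_two_impossibility
    (n m : ℕ) (hn : 3 ≤ n) (hm : 3 ≤ m) (hnm : n ≠ m) :
    ¬ ∃ (x y z t a a' : ℝ),
        0 < x ∧ 0 < y ∧ 0 < z ∧ 0 < t ∧
        a = x + y - 2 * x * y * sin (π / n) ^ 2 ∧
        1 - a = z + t - 2 * z * t * sin (π / n) ^ 2 ∧
        a' = x + y - 2 * x * y * sin (π / m) ^ 2 ∧
        1 - a' = z + t - 2 * z * t * sin (π / m) ^ 2 := by
  rintro ⟨x, y, z, t, a, a', hx, hy, hz, ht, h1, h2, h3, h4⟩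
  have hpos : x * y + z * t ≠ 0 := by positivity
  exact hnm (sin_sq_pi_div_injective hn hm (mul_left_cancel₀ hpos (by linarith)))
end

section
/- Let q be a nonzero real polynomial in two variables of total degree at most 2 that is irreducible, and let ω = {X ∈ ℝ² | q(X) = 0} be the corresponding conic. Let B and F be distinct points of ω, let P be a point of ℝ², and let l be a line (one-dimensional affine subspace) of ℝ². Then there exists a nonzero real polynomial r in two variables of total degree at most 2 with r(P) = 0 and r(B) = 0, such that for all points E, K, T: if E ∈ ω, E ≠ F, E ≠ B, K ∈ l, the points F, E, K are collinear, the points P, K, T are collinear, the points B, E, T are collinear, P ≠ K, and the four points P, K, B, E are not all collinear (so that T is the unique intersection point of the distinct lines PK and BE), then r(T) = 0. -/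
/-! This is the Braikenridge–Maclaurin generation of a conic, made explicit in coordinates.

Write `[u, v]` for the determinant of two plane vectors, let `l` be `{a · X + c = 0}`, put
`lam X = a · X + c`, and expand `q (B + d) = Q d + L d` with `Q` quadratic and `L` linear. The
vector `L d • d + Q d • (F - B)` vanishes for `d = F - B`, so each of its coordinates is divisible
by `[d, F - B]`, and the quotient is a *linear* map `M` (`exists_pencil_map`). If `B + d` lies on
the conic, then `Q d + L d = 0` and `M d` is parallel to `B + d - F`: the map `M` is the
projectivity between the pencils at `B` and `F` that the conic induces. Eliminating `K` from the
collinearity of `P, K, T` gives the quadratic equation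
`(a · M (T - B)) * [F - P, T - P] - lam F * [M (T - B), T - P] = 0`,
which holds at every admissible `T` and also at `T = P` and at `T = B`.

It remains to see when this polynomial is zero. Because `q` is irreducible, `Q` and `L` have no
common zero other than `0`, unless `Q = 0`; since `[M d, F - B] = L d` and `[M d, d] = -Q d`,
this makes `M` invertible (`pencil_dual_injective`). The polynomial can then vanish identically only if `P ∈ l`
or if `P = B` and `lam B • Q = a · L`; in the latter case `lam B • q` is a product of two affine
forms, contrary to irreducibility (`locus_ne_zero`). If `P ∈ l`, then `T ∈ l`, and `l` together
with a line through `B` is the required conic. If `Q = 0`, then `ω` is a line containing `T`.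
-/

/-- Evaluation of a real polynomial in two variables at a point of the Euclidean plane. -/
noncomputable def evalPt (q : MvPolynomial (Fin 2) ℝ) (X : EuclideanSpace ℝ (Fin 2)) : ℝ :=
  MvPolynomial.eval (fun i => X i) q

open MvPolynomial

/-- The affine form `a x + b y + c` as a polynomial. -/
noncomputable def aff (a b c : ℝ) : MvPolynomial (Fin 2) ℝ :=
  C a * X 0 + C b * X 1 + C c

lemma evalPt_aff (a b c : ℝ) (Z : EuclideanSpace ℝ (Fin 2)) :
    evalPt (aff a b c) Z = a * Z 0 + b * Z 1 + c := by
  simp [evalPt, aff]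

lemma evalPt_mul (p q : MvPolynomial (Fin 2) ℝ) (Z : EuclideanSpace ℝ (Fin 2)) :
    evalPt (p * q) Z = evalPt p Z * evalPt q Z := by
  simp [evalPt]

lemma evalPt_add (p q : MvPolynomial (Fin 2) ℝ) (Z : EuclideanSpace ℝ (Fin 2)) :
    evalPt (p + q) Z = evalPt p Z + evalPt q Z := by
  simp [evalPt]

lemma aff_totalDegree (a b c : ℝ) : (aff a b c).totalDegree ≤ 1 := by
  unfold aff
  have h : ∀ (a : ℝ) (i : Fin 2), (C a * X i : MvPolynomial (Fin 2) ℝ).totalDegree ≤ 1 := by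
    intro a i
    refine (totalDegree_mul _ _).trans ?_
    simp
  refine (totalDegree_add _ _).trans (max_le ((totalDegree_add _ _).trans (max_le ?_ ?_)) ?_)
  · exact h a 0
  · exact h b 1
  · simp

lemma aff_mul_totalDegree (a b c a' b' c' : ℝ) :
    (aff a b c * aff a' b' c').totalDegree ≤ 2 :=
  (totalDegree_mul _ _).trans (add_le_add (aff_totalDegree _ _ _) (aff_totalDegree _ _ _))

/-- A nonconstant affine form has a real zero. -/
lemma aff_exists_zero {a b : ℝ} (c : ℝ) (h : a ≠ 0 ∨ b ≠ 0) :
    ∃ Z : EuclideanSpace ℝ (Fin 2), evalPt (aff a b c) Z = 0 := by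
  rcases h with h | h
  · refine ⟨!₂[-c / a, 0], ?_⟩
    simp [evalPt_aff]; field_simp; ring
  · refine ⟨!₂[0, -c / b], ?_⟩
    simp [evalPt_aff]; field_simp; ring

lemma aff_not_isUnit {a b : ℝ} (c : ℝ) (h : a ≠ 0 ∨ b ≠ 0) : ¬ IsUnit (aff a b c) := by
  intro hu
  obtain ⟨Z, hZ⟩ := aff_exists_zero c h
  have := hu.map (MvPolynomial.eval (fun i => Z i))
  exact this.ne_zero hZ

lemma aff_ne_zero {a b : ℝ} (c : ℝ) (h : a ≠ 0 ∨ b ≠ 0) : aff a b c ≠ 0 := by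
  intro h0
  have e : ∀ x y : ℝ, a * x + b * y + c = 0 := by
    intro x y
    have := evalPt_aff a b c !₂[x, y]
    rw [h0] at this
    simpa [evalPt] using this.symm
  have h1 := e 0 0
  have h2 := e 1 0
  have h3 := e 0 1
  rcases h with h | h <;> apply h <;> linarith

lemma not_irreducible_aff_mul {a b c a' b' c' : ℝ} (h : a ≠ 0 ∨ b ≠ 0) (h' : a' ≠ 0 ∨ b' ≠ 0) :
    ¬ Irreducible (aff a b c * aff a' b' c') := fun hi =>
  (hi.isUnit_or_isUnit rfl).elim (aff_not_isUnit c h) (aff_not_isUnit c' h')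

/-- The polynomial of degree at most two which vanishes at `(b₁, b₂)` and has quadratic part
`α, β, γ` and linear part `δ, ε` when expanded there. -/
noncomputable def quadAt (b₁ b₂ α β γ δ ε : ℝ) : MvPolynomial (Fin 2) ℝ :=
  C α * (X 0 - C b₁) ^ 2 + C β * ((X 0 - C b₁) * (X 1 - C b₂)) + C γ * (X 1 - C b₂) ^ 2
    + C δ * (X 0 - C b₁) + C ε * (X 1 - C b₂)

lemma evalPt_quadAt (b₁ b₂ α β γ δ ε : ℝ) (Z : EuclideanSpace ℝ (Fin 2)) :
    evalPt (quadAt b₁ b₂ α β γ δ ε) Z =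
      α * (Z 0 - b₁) ^ 2 + β * ((Z 0 - b₁) * (Z 1 - b₂)) + γ * (Z 1 - b₂) ^ 2
        + δ * (Z 0 - b₁) + ε * (Z 1 - b₂) := by
  simp [evalPt, quadAt]

lemma exists_coeffs (q : MvPolynomial (Fin 2) ℝ) (hq : q.totalDegree ≤ 2) :
    ∃ a b c d e f : ℝ, q = C a * X 0 ^ 2 + C b * (X 0 * X 1) + C c * X 1 ^ 2
      + C d * X 0 + C e * X 1 + C f := by
  rw [q.as_sum]
  refine Finset.sum_induction _ (fun p : MvPolynomial (Fin 2) ℝ => ∃ a b c d e f : ℝ,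
    p = C a * X 0 ^ 2 + C b * (X 0 * X 1) + C c * X 1 ^ 2 + C d * X 0 + C e * X 1 + C f) ?_ ?_ ?_
  · rintro _ _ ⟨a, b, c, d, e, f, rfl⟩ ⟨a', b', c', d', e', f', rfl⟩
    refine ⟨a + a', b + b', c + c', d + d', e + e', f + f', ?_⟩
    simp only [map_add]; ring
  · exact ⟨0, 0, 0, 0, 0, 0, by simp⟩
  · intro s hs
    have h := (le_totalDegree hs).trans hq
    rw [Finsupp.sum_fintype _ _ (fun _ => rfl), Fin.sum_univ_two] at h
    rw [monomial_eq, Finsupp.prod_fintype _ _ (fun _ => pow_zero _), Fin.prod_univ_two]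
    generalize coeff s q = k
    generalize s 0 = m at *
    generalize s 1 = n at *
    have hm : m ≤ 2 := by omega
    have hn : n ≤ 2 := by omega
    interval_cases m <;> interval_cases n <;> try omega
    · exact ⟨0, 0, 0, 0, 0, k, by simp⟩
    · exact ⟨0, 0, 0, 0, k, 0, by simp⟩
    · exact ⟨0, 0, k, 0, 0, 0, by simp⟩
    · exact ⟨0, 0, 0, k, 0, 0, by simp⟩
    · exact ⟨0, k, 0, 0, 0, 0, by simp⟩
    · exact ⟨k, 0, 0, 0, 0, 0, by simp⟩

lemma exists_quadAt (q : MvPolynomial (Fin 2) ℝ) (hq : q.totalDegree ≤ 2)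
    (B : EuclideanSpace ℝ (Fin 2)) (hB : evalPt q B = 0) :
    ∃ α β γ δ ε : ℝ, q = quadAt (B 0) (B 1) α β γ δ ε := by
  obtain ⟨a, b, c, d, e, f, rfl⟩ := exists_coeffs q hq
  refine ⟨a, b, c, 2 * a * B 0 + b * B 1 + d, b * B 0 + 2 * c * B 1 + e, ?_⟩
  have hf : f = -(a * B 0 ^ 2 + b * (B 0 * B 1) + c * B 1 ^ 2 + d * B 0 + e * B 1) := by
    simp [evalPt] at hB
    linarith
  rw [hf]
  simp only [quadAt, map_add, map_mul, map_neg, map_pow, map_ofNat]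
  ring

/-- For an irreducible `Q + L` with `Q ≠ 0`, the forms `Q` and `L` have no common zero
`d ≠ 0`: otherwise the linear form `[d, ·]` is a proper factor. -/
lemma no_common_zero {b₁ b₂ α β γ δ ε : ℝ} (hirr : Irreducible (quadAt b₁ b₂ α β γ δ ε))
    (hQ : ¬ (α = 0 ∧ β = 0 ∧ γ = 0)) (x y : ℝ)
    (h1 : α * x ^ 2 + β * (x * y) + γ * y ^ 2 = 0) (h2 : δ * x + ε * y = 0) :
    x = 0 ∧ y = 0 := by
  by_contra hxy
  have hxy' : y ≠ 0 ∨ x ≠ 0 := by tauto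
  obtain ⟨m, n, k, rfl, rfl, rfl, rfl, rfl⟩ : ∃ m n k : ℝ, α = -y * m ∧ β = x * m - y * n ∧
      γ = x * n ∧ δ = -y * k ∧ ε = x * k := by
    rcases hxy' with h | h
    · refine ⟨-α / y, (-β + x * (-α / y)) / y, -δ / y, ?_, ?_, ?_, ?_, ?_⟩
      · field_simp
      · field_simp; ring
      · field_simp; linarith
      · field_simp
      · field_simp; linarith
    · refine ⟨(β + y * (γ / x)) / x, γ / x, ε / x, ?_, ?_, ?_, ?_, ?_⟩
      · field_simp; linarith
      · field_simp; ring
      · field_simp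
      · field_simp; linarith
      · field_simp
  have hmn : m ≠ 0 ∨ n ≠ 0 := by
    by_contra! h
    apply hQ
    simp [h.1, h.2]
  refine not_irreducible_aff_mul (a := -y) (b := x) (c := y * b₁ - x * b₂)
    (c' := k - m * b₁ - n * b₂) (by simpa using hxy') hmn ?_
  convert hirr using 1
  simp only [aff, quadAt, map_mul, map_neg, map_sub]
  ring

/-- The scalar `m` determines the linear map `M (x, y) = (m x - γ y, α x + (m + β) y)`, which
satisfies `[M d, (g, h)] = L d` and `[M d, d] = -Q d`. Here `(g, h)` stands for `F - B`. -/
lemma exists_pencil_map {α β γ δ ε g h : ℝ} (hgh : g ≠ 0 ∨ h ≠ 0)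
    (hF : α * g ^ 2 + β * (g * h) + γ * h ^ 2 + δ * g + ε * h = 0) :
    ∃ m : ℝ, δ = m * h - α * g ∧ ε = -m * g - γ * h - β * g := by
  rcases hgh with hg | hh
  · refine ⟨-(γ * h + β * g + ε) / g, ?_, ?_⟩
    · field_simp; linarith
    · field_simp; ring
  · refine ⟨(α * g + δ) / h, ?_, ?_⟩
    · field_simp; ring
    · field_simp; linarith

/-- No nonzero covector kills the image of `M`: a kernel vector of `M` would be a nonzero common zero of
`Q` and `L`. -/
lemma pencil_dual_injective {α β γ δ ε g h m : ℝ} (hQ : ¬ (α = 0 ∧ β = 0 ∧ γ = 0))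
    (hno : ∀ x y : ℝ, α * x ^ 2 + β * (x * y) + γ * y ^ 2 = 0 → δ * x + ε * y = 0 → x = 0 ∧ y = 0)
    (hδ : δ = m * h - α * g) (hε : ε = -m * g - γ * h - β * g) (s t : ℝ)
    (h1 : s * m + t * α = 0) (h2 : -s * γ + t * (m + β) = 0) : s = 0 ∧ t = 0 := by
  by_contra hst
  have hdet : m * (m + β) + α * γ = 0 := by
    by_contra hd
    apply hst
    constructor
    · apply (mul_eq_zero.1 (?_ : s * (m * (m + β) + α * γ) = 0)).resolve_right hd
      linear_combination (m + β) * h1 - α * h2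
    · apply (mul_eq_zero.1 (?_ : t * (m * (m + β) + α * γ) = 0)).resolve_right hd
      linear_combination γ * h1 + m * h2
  have k1 := hno γ m (by linear_combination γ * hdet)
    (by rw [hδ, hε]; linear_combination (-g) * hdet)
  have k2 := hno (m + β) (-α) (by linear_combination α * hdet)
    (by rw [hδ, hε]; linear_combination h * hdet)
  apply hQ
  refine ⟨by linarith [k2.2], by linarith [k2.1, k1.2], k1.1⟩

/-- The polynomial `X ↦ (a · M (X - B)) [F - P, X - P] - lamF [M (X - B), X - P]`, grouped by the two
coordinates of `M (X - B)`. -/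
noncomputable def locus (α β γ m a₁ a₂ lamF b₁ b₂ f₁ f₂ p₁ p₂ : ℝ) : MvPolynomial (Fin 2) ℝ :=
  aff m (-γ) (γ * b₂ - m * b₁) *
      aff (-a₁ * (f₂ - p₂)) (a₁ * (f₁ - p₁) - lamF)
        (a₁ * ((f₂ - p₂) * p₁ - (f₁ - p₁) * p₂) + lamF * p₂) +
    aff α (m + β) (-α * b₁ - (m + β) * b₂) *
      aff (-a₂ * (f₂ - p₂) + lamF) (a₂ * (f₁ - p₁))
        (a₂ * ((f₂ - p₂) * p₁ - (f₁ - p₁) * p₂) - lamF * p₁)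

lemma evalPt_locus (α β γ m a₁ a₂ lamF b₁ b₂ f₁ f₂ p₁ p₂ : ℝ) (Z : EuclideanSpace ℝ (Fin 2)) :
    evalPt (locus α β γ m a₁ a₂ lamF b₁ b₂ f₁ f₂ p₁ p₂) Z =
      (a₁ * (m * (Z 0 - b₁) - γ * (Z 1 - b₂)) + a₂ * (α * (Z 0 - b₁) + (m + β) * (Z 1 - b₂))) *
        ((f₁ - p₁) * (Z 1 - p₂) - (f₂ - p₂) * (Z 0 - p₁)) -
      lamF * ((m * (Z 0 - b₁) - γ * (Z 1 - b₂)) * (Z 1 - p₂) -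
        (α * (Z 0 - b₁) + (m + β) * (Z 1 - b₂)) * (Z 0 - p₁)) := by
  simp only [locus, evalPt_add, evalPt_mul, evalPt_aff]
  ring

lemma locus_totalDegree (α β γ m a₁ a₂ lamF b₁ b₂ f₁ f₂ p₁ p₂ : ℝ) :
    (locus α β γ m a₁ a₂ lamF b₁ b₂ f₁ f₂ p₁ p₂).totalDegree ≤ 2 :=
  (totalDegree_add _ _).trans
    (max_le (aff_mul_totalDegree _ _ _ _ _ _) (aff_mul_totalDegree _ _ _ _ _ _))

lemma locus_ne_zero {α β γ δ ε m a₁ a₂ c b₁ b₂ f₁ f₂ p₁ p₂ : ℝ}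
    (hirr : Irreducible (quadAt b₁ b₂ α β γ δ ε)) (hQ : ¬ (α = 0 ∧ β = 0 ∧ γ = 0))
    (ha : a₁ ≠ 0 ∨ a₂ ≠ 0) (hP : a₁ * p₁ + a₂ * p₂ + c ≠ 0)
    (hδ : δ = m * (f₂ - b₂) - α * (f₁ - b₁))
    (hε : ε = -m * (f₁ - b₁) - γ * (f₂ - b₂) - β * (f₁ - b₁)) :
    locus α β γ m a₁ a₂ (a₁ * f₁ + a₂ * f₂ + c) b₁ b₂ f₁ f₂ p₁ p₂ ≠ 0 := by
  intro h0
  have ev : ∀ x y : ℝ,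
      (a₁ * (m * x - γ * y) + a₂ * (α * x + (m + β) * y)) *
        ((f₁ - p₁) * (b₂ + y - p₂) - (f₂ - p₂) * (b₁ + x - p₁)) -
      (a₁ * f₁ + a₂ * f₂ + c) * ((m * x - γ * y) * (b₂ + y - p₂) -
        (α * x + (m + β) * y) * (b₁ + x - p₁)) = 0 := by
    intro x y
    have := evalPt_locus α β γ m a₁ a₂ (a₁ * f₁ + a₂ * f₂ + c) b₁ b₂ f₁ f₂ p₁ p₂
      !₂[b₁ + x, b₂ + y]
    rw [h0] at this
    simpa [evalPt] using this.symm
  have inj := pencil_dual_injective hQ (no_common_zero hirr hQ) hδ hε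
  set lF := a₁ * f₁ + a₂ * f₂ + c with hlF
  set D := (f₁ - p₁) * (b₂ - p₂) - (f₂ - p₂) * (b₁ - p₁) with hD
  -- The part of the polynomial that is linear in `X - B` is a covector applied to `M (X - B)`.
  obtain ⟨e1, e2⟩ := inj (a₁ * D - lF * (b₂ - p₂)) (a₂ * D + lF * (b₁ - p₁))
    (by linear_combination (ev 1 0 - ev (-1) 0) / 2)
    (by linear_combination (ev 0 1 - ev 0 (-1)) / 2)
  -- Pairing that covector with `F - P` gives `-lam P * D`.
  have hD0 : D = 0 := by
    apply (mul_eq_zero.1 (?_ : (a₁ * p₁ + a₂ * p₂ + c) * D = 0)).resolve_left hP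
    linear_combination (-(f₁ - p₁)) * e1 - (f₂ - p₂) * e2
  rw [hD0] at e1 e2
  by_cases hF : lF = 0
  · have key : ∀ x y : ℝ, (a₁ * (m * x - γ * y) + a₂ * (α * x + (m + β) * y)) *
        ((f₁ - p₁) * y - (f₂ - p₂) * x) = 0 := by
      intro x y
      have := ev x y
      rw [hF] at this
      linear_combination this - (a₁ * (m * x - γ * y) + a₂ * (α * x + (m + β) * y)) * hD0
    have hA : ¬ (a₁ * m + a₂ * α = 0 ∧ -a₁ * γ + a₂ * (m + β) = 0) := by
      rintro ⟨u, v⟩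
      obtain ⟨z1, z2⟩ := inj a₁ a₂ u v
      tauto
    have kx : (a₁ * m + a₂ * α) * (f₂ - p₂) = 0 := by linear_combination -(key 1 0)
    have ky : (-a₁ * γ + a₂ * (m + β)) * (f₁ - p₁) = 0 := by linear_combination key 0 1
    have kxy : (a₁ * m + a₂ * α) * (f₁ - p₁) = (-a₁ * γ + a₂ * (m + β)) * (f₂ - p₂) := by
      linear_combination key 1 1 + kx - ky
    have : f₁ - p₁ = 0 ∧ f₂ - p₂ = 0 := by
      by_cases hu : a₁ * m + a₂ * α = 0
      · have hv : -a₁ * γ + a₂ * (m + β) ≠ 0 := fun hv => hA ⟨hu, hv⟩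
        rw [hu, zero_mul] at kxy
        exact ⟨(mul_eq_zero.1 ky).resolve_left hv, (mul_eq_zero.1 kxy.symm).resolve_left hv⟩
      · have h2 := (mul_eq_zero.1 kx).resolve_left hu
        rw [h2, mul_zero] at kxy
        exact ⟨(mul_eq_zero.1 kxy).resolve_left hu, h2⟩
    apply hP
    linear_combination hF + hlF - a₁ * this.1 - a₂ * this.2
  · have w2 : b₂ - p₂ = 0 :=
      (mul_eq_zero.1 (by linear_combination -e1 : lF * (b₂ - p₂) = 0)).resolve_left hF
    have w1 : b₁ - p₁ = 0 :=
      (mul_eq_zero.1 (by linear_combination e2 : lF * (b₁ - p₁) = 0)).resolve_left hF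
    obtain rfl : b₂ = p₂ := by linarith
    obtain rfl : b₁ = p₁ := by linarith
    -- With `P = B` the identity reads `lam B * Q d = (a · d) * L d`.
    have key : ∀ x y : ℝ, (a₁ * b₁ + a₂ * b₂ + c) * (α * x ^ 2 + β * (x * y) + γ * y ^ 2) =
        (δ * x + ε * y) * (a₁ * x + a₂ * y) := by
      intro x y
      rw [hδ, hε]
      linear_combination ev x y
    set k := a₁ * b₁ + a₂ * b₂ + c with hk
    have hα : α = δ * (a₁ / k) := by field_simp; linear_combination key 1 0
    have hγ : γ = ε * (a₂ / k) := by field_simp; linear_combination key 0 1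
    have hβ : β = δ * (a₂ / k) + ε * (a₁ / k) := by
      field_simp; linear_combination key 1 1 - key 1 0 - key 0 1
    have hL : δ ≠ 0 ∨ ε ≠ 0 := by
      by_contra! hL
      apply hQ
      rw [hα, hβ, hγ, hL.1, hL.2]
      simp
    refine not_irreducible_aff_mul (a := δ) (b := ε) (c := -δ * b₁ - ε * b₂)
      (a' := a₁ / k) (b' := a₂ / k) (c' := 1 - a₁ / k * b₁ - a₂ / k * b₂) hL ?_ ?_
    · exact ha.imp (fun h => div_ne_zero h hP) (fun h => div_ne_zero h hP)
    · convert hirr using 1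
      rw [hα, hβ, hγ]
      simp only [aff, quadAt, map_add, map_mul, map_neg, map_sub, map_one]
      ring

/-- A point `K` on the line through distinct points `A`, `D` has the form `A + t (D - A)`. -/
lemma collinear_param {A D K : EuclideanSpace ℝ (Fin 2)} (h : Collinear ℝ {A, D, K})
    (hne : D ≠ A) :
    ∃ t : ℝ, K 0 - A 0 = t * (D 0 - A 0) ∧ K 1 - A 1 = t * (D 1 - A 1) := by
  obtain ⟨v, hv⟩ := (collinear_iff_of_mem (p₀ := A) (by simp)).1 h
  obtain ⟨r, hr⟩ := hv D (by simp)
  obtain ⟨s, hs⟩ := hv K (by simp)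
  have hr0 : r ≠ 0 := by
    rintro rfl
    simp at hr
    exact hne hr
  refine ⟨s / r, ?_, ?_⟩ <;> rw [hr, hs] <;> simp <;> field_simp

lemma line_equation (l : AffineSubspace ℝ (EuclideanSpace ℝ (Fin 2)))
    (hl : Module.finrank ℝ l.direction = 1) :
    ∃ a₁ a₂ c : ℝ, (a₁ ≠ 0 ∨ a₂ ≠ 0) ∧ ∀ K ∈ l, a₁ * K 0 + a₂ * K 1 + c = 0 := by
  obtain ⟨v, hv0, hv⟩ := finrank_eq_one_iff'.1 hl
  have hne : -(v : EuclideanSpace ℝ (Fin 2)) 1 ≠ 0 ∨ (v : EuclideanSpace ℝ (Fin 2)) 0 ≠ 0 := by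
    by_contra! h
    apply hv0
    ext i
    fin_cases i
    · simpa using h.2
    · simpa using h.1
  rcases (l : Set (EuclideanSpace ℝ (Fin 2))).eq_empty_or_nonempty with he | ⟨A, hA⟩
  · refine ⟨_, _, 0, hne, fun K hK => ?_⟩
    have : K ∈ (l : Set (EuclideanSpace ℝ (Fin 2))) := hK
    simp [he] at this
  · refine ⟨_, _, (v : EuclideanSpace ℝ (Fin 2)).ofLp 1 * A 0 -
      (v : EuclideanSpace ℝ (Fin 2)).ofLp 0 * A 1, hne, fun K hK => ?_⟩
    obtain ⟨t, ht⟩ := hv ⟨K -ᵥ A, AffineSubspace.vsub_mem_direction hK hA⟩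
    have ht' : t • (v : EuclideanSpace ℝ (Fin 2)) = K - A := congrArg Subtype.val ht
    have h0 := congrArg (fun Z : EuclideanSpace ℝ (Fin 2) => Z 0) ht'
    have h1 := congrArg (fun Z : EuclideanSpace ℝ (Fin 2) => Z 1) ht'
    simp at h0 h1
    linear_combination (v : EuclideanSpace ℝ (Fin 2)).ofLp 1 * h0 -
      (v : EuclideanSpace ℝ (Fin 2)).ofLp 0 * h1

/-- Distinct points differ in one of the two coordinates. -/
lemma coord_ne {A D : EuclideanSpace ℝ (Fin 2)} (h : A ≠ D) : D 0 - A 0 ≠ 0 ∨ D 1 - A 1 ≠ 0 := by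
  by_contra! hc
  apply h
  ext i
  fin_cases i
  · simpa using (sub_eq_zero.1 hc.1).symm
  · simpa using (sub_eq_zero.1 hc.2).symm

/-- Lemma 5.1: let `B, F` be distinct points on an irreducible conic `ω`, `P` a point and
`l` a line.  As `E` moves on `ω`, let `K = FE ∩ l` and let `T = PK ∩ BE`.  Then `T` stays
on a conic through `P` and `B`. -/
theorem maclaurin_lemma
    (q : MvPolynomial (Fin 2) ℝ) (hq0 : q ≠ 0) (hqdeg : q.totalDegree ≤ 2)
    (hqirr : Irreducible q)
    (ω : Set (EuclideanSpace ℝ (Fin 2)))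
    (hω : ω = {X : EuclideanSpace ℝ (Fin 2) | evalPt q X = 0})
    (B F : EuclideanSpace ℝ (Fin 2)) (hB : B ∈ ω) (hF : F ∈ ω) (hBF : B ≠ F)
    (P : EuclideanSpace ℝ (Fin 2))
    (l : AffineSubspace ℝ (EuclideanSpace ℝ (Fin 2)))
    (hl : Module.finrank ℝ l.direction = 1) :
    ∃ r : MvPolynomial (Fin 2) ℝ, r ≠ 0 ∧ r.totalDegree ≤ 2 ∧
      evalPt r P = 0 ∧ evalPt r B = 0 ∧
      ∀ E K T : EuclideanSpace ℝ (Fin 2),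
        E ∈ ω → E ≠ F → E ≠ B → K ∈ l →
        Collinear ℝ ({F, E, K} : Set (EuclideanSpace ℝ (Fin 2))) →
        Collinear ℝ ({P, K, T} : Set (EuclideanSpace ℝ (Fin 2))) →
        Collinear ℝ ({B, E, T} : Set (EuclideanSpace ℝ (Fin 2))) →
        P ≠ K →
        ¬ Collinear ℝ ({P, K, B, E} : Set (EuclideanSpace ℝ (Fin 2))) →
        evalPt r T = 0 := by
  subst hω
  obtain ⟨α, β, γ, δ, ε, rfl⟩ := exists_quadAt q hqdeg B hB
  obtain ⟨a₁, a₂, c, ha, hlin⟩ := line_equation l hl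
  simp only [Set.mem_ofPred_eq, evalPt_quadAt] at hF
  by_cases hQ : α = 0 ∧ β = 0 ∧ γ = 0
  · -- Here `ω` is the line `L = 0`.
    obtain ⟨rfl, rfl, rfl⟩ := hQ
    have hL : δ ≠ 0 ∨ ε ≠ 0 := by
      by_contra! h
      apply hq0
      simp [quadAt, h.1, h.2]
    refine ⟨aff δ ε (-δ * B 0 - ε * B 1) * aff 1 0 (-P 0),
      mul_ne_zero (aff_ne_zero _ hL) (aff_ne_zero _ (by simp)), aff_mul_totalDegree _ _ _ _ _ _,
      ?_, ?_, ?_⟩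
    · simp only [evalPt_mul, evalPt_aff]; ring
    · simp only [evalPt_mul, evalPt_aff]; ring
    · intro E K T hE _ hEB _ _ _ hT _ _
      simp only [Set.mem_ofPred_eq, evalPt_quadAt] at hE
      obtain ⟨t, t0, t1⟩ := collinear_param hT hEB
      simp only [evalPt_mul, evalPt_aff]
      linear_combination (T 0 - P 0) * (t * hE + δ * t0 + ε * t1)
  by_cases hP : a₁ * P 0 + a₂ * P 1 + c = 0
  · refine ⟨aff a₁ a₂ c * aff 1 0 (-B 0),
      mul_ne_zero (aff_ne_zero _ ha) (aff_ne_zero _ (by simp)), aff_mul_totalDegree _ _ _ _ _ _,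
      ?_, ?_, ?_⟩
    · simp only [evalPt_mul, evalPt_aff, hP, zero_mul]
    · simp only [evalPt_mul, evalPt_aff]; ring
    · intro E K T _ _ _ hK _ hT _ hPK _
      obtain ⟨t, t0, t1⟩ := collinear_param hT hPK.symm
      simp only [evalPt_mul, evalPt_aff]
      linear_combination (T 0 - B 0) *
        (a₁ * t0 + a₂ * t1 + t * hlin K hK + (1 - t) * hP)
  obtain ⟨m, hδ, hε⟩ := exists_pencil_map (coord_ne hBF) hF
  refine ⟨locus α β γ m a₁ a₂ (a₁ * F 0 + a₂ * F 1 + c) (B 0) (B 1) (F 0) (F 1) (P 0) (P 1),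
    locus_ne_zero hqirr hQ ha hP hδ hε, locus_totalDegree _ _ _ _ _ _ _ _ _ _ _ _ _, ?_, ?_, ?_⟩
  · rw [evalPt_locus]; ring
  · rw [evalPt_locus]; ring
  intro E K T hE hEF hEB hK hFEK hPKT hBET hPK _
  simp only [Set.mem_ofPred_eq, evalPt_quadAt] at hE
  obtain ⟨t, t0, t1⟩ := collinear_param hBET hEB
  obtain ⟨u, u0, u1⟩ := collinear_param hFEK hEF
  obtain ⟨s, s0, s1⟩ := collinear_param hPKT hPK.symm
  have hlK := hlin K hK
  rw [evalPt_locus, t0, t1]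
  set x := E 0 - B 0 with hx
  set y := E 1 - B 1 with hy
  set g := F 0 - B 0 with hg
  set h := F 1 - B 1 with hh
  have hQe : α * x ^ 2 + β * (x * y) + γ * y ^ 2 ≠ 0 := by
    intro h0
    obtain ⟨z0, z1⟩ := no_common_zero hqirr hQ x y h0 (by linear_combination hE - h0)
    rcases coord_ne hEB.symm with z | z
    · exact z z0
    · exact z z1
  -- `[d, F - B] M d = Q d • (F - E)` for `d = E - B`.
  have m0 : (x * h - y * g) * (m * x - γ * y) =
      (α * x ^ 2 + β * (x * y) + γ * y ^ 2) * (F 0 - E 0) := by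
    rw [hδ, hε] at hE
    linear_combination x * hE + (α * x ^ 2 + β * (x * y) + γ * y ^ 2) * (hx - hg)
  have m1 : (x * h - y * g) * (α * x + (m + β) * y) =
      (α * x ^ 2 + β * (x * y) + γ * y ^ 2) * (F 1 - E 1) := by
    rw [hδ, hε] at hE
    linear_combination y * hE + (α * x ^ 2 + β * (x * y) + γ * y ^ 2) * (hy - hh)
  have hdet : x * h - y * g ≠ 0 := by
    intro h0
    rw [h0, zero_mul] at m0 m1
    rcases coord_ne hEF with z | z
    · exact z ((mul_eq_zero.1 m0.symm).resolve_left hQe)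
    · exact z ((mul_eq_zero.1 m1.symm).resolve_left hQe)
  -- So `M d = μ • (E - F)`, which is the only property of `E ∈ ω` needed below.
  obtain ⟨μ, n0, n1⟩ : ∃ μ : ℝ, m * x - γ * y = μ * (E 0 - F 0) ∧
      α * x + (m + β) * y = μ * (E 1 - F 1) := by
    refine ⟨-(α * x ^ 2 + β * (x * y) + γ * y ^ 2) / (x * h - y * g), ?_, ?_⟩
    · rw [div_mul_eq_mul_div, eq_div_iff hdet]; linear_combination m0
    · rw [div_mul_eq_mul_div, eq_div_iff hdet]; linear_combination m1
  have M0 : m * (t * x) - γ * (t * y) = t * μ * (E 0 - F 0) := by linear_combination t * n0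
  have M1 : α * (t * x) + (m + β) * (t * y) = t * μ * (E 1 - F 1) := by
    linear_combination t * n1
  rw [M0, M1]
  have hcross : (K 0 - P 0) * (T 1 - P 1) - (K 1 - P 1) * (T 0 - P 0) = 0 := by
    rw [s0, s1]; ring
  have k0 : K 0 = F 0 + u * (E 0 - F 0) := by linarith
  have k1 : K 1 = F 1 + u * (E 1 - F 1) := by linarith
  rw [k0, k1] at hcross hlK
  linear_combination t * μ * ((a₁ * (E 0 - F 0) + a₂ * (E 1 - F 1)) * hcross -
    ((E 0 - F 0) * (T 1 - P 1) - (E 1 - F 1) * (T 0 - P 0)) * hlK)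
end

section
/- Let ω be a circle in the Euclidean plane ℝ² (a metric sphere with positive radius), let B and F be distinct points of ω, and let P be a point with P ≠ B. Then there exists a circle S in ℝ² passing through P and B such that for every E ∈ ω with E ≠ B and E ≠ F, and every point T such that B, E, T are collinear and T − P is a scalar multiple of E − F, the point T lies on S. -/
/-!
Work in coordinates, writing `u × v` for the planar cross product. By the inscribed angle theorem
the oriented angle at `E` between the lines `EB` and `EF` equals the angle between the chord `BF`
and the tangent to `ω` at `B`, so there is a real `μ` (minus its cotangent, up to orientation)
with `(E - B) ⬝ (E - F) + μ * ((E - B) × (E - F)) = 0` for every `E` on `ω`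
(`inscribed_angle_coords`). The denominator of `μ` is `(F - B) ⬝ (B - O)`, which is nonzero since
the chord `BF` is not tangent to `ω`.

Since `T - B` and `T - P` are multiples of `E - B` and `E - F`, the same relation holds for
`(T - B, T - P)`, and `(T - B) ⬝ (T - P) + μ * ((T - B) × (T - P)) = 0` is the equation of a circle
through `P` and `B`, with center `(P + B) / 2` shifted along the perpendicular bisector of `PB`.
-/

/-- A chord `BF` of a circle centered at the origin is not tangent to it at `B`. -/
lemma chord_not_tangent {b₁ b₂ f₁ f₂ ρ : ℝ} (hB : b₁ ^ 2 + b₂ ^ 2 = ρ ^ 2)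
    (hF : f₁ ^ 2 + f₂ ^ 2 = ρ ^ 2) (hBF : ¬ (b₁ = f₁ ∧ b₂ = f₂)) :
    (f₁ - b₁) * b₁ + (f₂ - b₂) * b₂ ≠ 0 := by
  intro h
  have h0 : (b₁ - f₁) ^ 2 + (b₂ - f₂) ^ 2 = 0 := by linear_combination hF - hB - 2 * h
  exact hBF ⟨by nlinarith [sq_nonneg (b₁ - f₁), sq_nonneg (b₂ - f₂)],
    by nlinarith [sq_nonneg (b₁ - f₁), sq_nonneg (b₂ - f₂)]⟩

/-- The inscribed angle theorem in tangent-chord form, for a circle centered at the origin: the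
ratio of dot product to cross product of `E - B` and `E - F` does not depend on `E`. -/
lemma inscribed_angle_coords {b₁ b₂ f₁ f₂ e₁ e₂ ρ : ℝ} (hB : b₁ ^ 2 + b₂ ^ 2 = ρ ^ 2)
    (hF : f₁ ^ 2 + f₂ ^ 2 = ρ ^ 2) (hE : e₁ ^ 2 + e₂ ^ 2 = ρ ^ 2) :
    ((f₁ - b₁) * b₁ + (f₂ - b₂) * b₂) * ((e₁ - b₁) * (e₁ - f₁) + (e₂ - b₂) * (e₂ - f₂)) +
      (b₁ * f₂ - b₂ * f₁) * ((e₁ - b₁) * (e₂ - f₂) - (e₂ - b₂) * (e₁ - f₁)) = 0 := by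
  linear_combination (f₁ * b₁ + f₂ * b₂ - b₁ ^ 2 - b₂ ^ 2) * hE +
    (b₁ ^ 2 + b₂ ^ 2 - e₁ * b₁ - e₂ * b₂) * hF + (e₁ * b₁ + e₂ * b₂ - f₁ * b₁ - f₂ * b₂) * hB

lemma mem_sphere_iff_coords {X c : EuclideanSpace ℝ (Fin 2)} {r : ℝ} (hr : 0 < r) :
    X ∈ Metric.sphere c r ↔ (X 0 - c 0) ^ 2 + (X 1 - c 1) ^ 2 = r ^ 2 := by
  rw [Metric.mem_sphere, EuclideanSpace.dist_eq, Real.sqrt_eq_iff_eq_sq (by positivity) hr.le]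
  simp [Fin.sum_univ_two, Real.dist_eq, sq_abs]


/-- Case 1 of the proof of Lemma 5.1: if `B, F` are distinct points of a circle `ω`, `P ≠ B`
is a point, and for `E` on `ω` the point `T` is the intersection of the line `BE` with the
line through `P` parallel to `FE`, then `T` lies on a fixed circle through `P` and `B`. -/
theorem circle_case_of_maclaurin_lemma
    (O : EuclideanSpace ℝ (Fin 2)) (ρ : ℝ) (hρ : 0 < ρ)
    (B F P : EuclideanSpace ℝ (Fin 2))
    (hB : B ∈ Metric.sphere O ρ) (hF : F ∈ Metric.sphere O ρ) (hBF : B ≠ F)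
    (hPB : P ≠ B) :
    ∃ (c : EuclideanSpace ℝ (Fin 2)) (r : ℝ), 0 < r ∧
      P ∈ Metric.sphere c r ∧ B ∈ Metric.sphere c r ∧
      ∀ E T : EuclideanSpace ℝ (Fin 2),
        E ∈ Metric.sphere O ρ → E ≠ B → E ≠ F →
        Collinear ℝ ({B, E, T} : Set (EuclideanSpace ℝ (Fin 2))) →
        (∃ t : ℝ, T - P = t • (E - F)) →
        T ∈ Metric.sphere c r := by
  rw [mem_sphere_iff_coords hρ] at hB hF
  have hα := chord_not_tangent hB hF (fun h => hBF (by
    ext i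
    fin_cases i
    · simpa using h.1
    · simpa using h.2))
  set α := (F 0 - O 0 - (B 0 - O 0)) * (B 0 - O 0) + (F 1 - O 1 - (B 1 - O 1)) * (B 1 - O 1)
    with hαdef
  set β := (B 0 - O 0) * (F 1 - O 1) - (B 1 - O 1) * (F 0 - O 0) with hβdef
  obtain ⟨μ, hμ⟩ : ∃ μ : ℝ, β = α * μ := ⟨β / α, by field_simp⟩
  obtain ⟨c, hc0, hc1⟩ : ∃ c : EuclideanSpace ℝ (Fin 2),
      c 0 = (P 0 + B 0) / 2 + μ / 2 * (P 1 - B 1) ∧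
      c 1 = (P 1 + B 1) / 2 - μ / 2 * (P 0 - B 0) :=
    ⟨!₂[(P 0 + B 0) / 2 + μ / 2 * (P 1 - B 1), (P 1 + B 1) / 2 - μ / 2 * (P 0 - B 0)],
      by simp, by simp⟩
  have hr : 0 < dist B c := by
    refine dist_pos.2 fun h => hPB ?_
    rw [← h] at hc0 hc1
    -- The inner product of `2 • (B - c)` with `P - B` is `-‖P - B‖ ^ 2`.
    have h0 : (P 0 - B 0) ^ 2 + (P 1 - B 1) ^ 2 = 0 := by
      linear_combination -2 * (P 0 - B 0) * hc0 - 2 * (P 1 - B 1) * hc1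
    ext i
    fin_cases i
    · show P 0 = B 0
      nlinarith [sq_nonneg (P 0 - B 0), sq_nonneg (P 1 - B 1)]
    · show P 1 = B 1
      nlinarith [sq_nonneg (P 0 - B 0), sq_nonneg (P 1 - B 1)]
  have hBc : B ∈ Metric.sphere c (dist B c) := rfl
  have hBc' := (mem_sphere_iff_coords hr).1 hBc
  have key : ∀ T : EuclideanSpace ℝ (Fin 2),
      (T 0 - B 0) * (T 0 - P 0) + (T 1 - B 1) * (T 1 - P 1) +
        μ * ((T 0 - B 0) * (T 1 - P 1) - (T 1 - B 1) * (T 0 - P 0)) = 0 →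
      T ∈ Metric.sphere c (dist B c) := by
    intro T hT
    rw [mem_sphere_iff_coords hr, ← hBc', hc0, hc1]
    linear_combination hT
  refine ⟨c, dist B c, hr, key P (by ring), hBc, ?_⟩
  rintro E T hE hEB - hcol ⟨t, ht⟩
  rw [mem_sphere_iff_coords hρ] at hE
  obtain ⟨v, hv⟩ := (collinear_iff_of_mem (p₀ := B) (by simp)).1 hcol
  obtain ⟨x, hx⟩ := hv E (by simp)
  obtain ⟨y, hy⟩ := hv T (by simp)
  have hx0 : x ≠ 0 := by
    rintro rfl
    exact hEB (by simpa using hx)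
  obtain ⟨s, hs⟩ : ∃ s : ℝ, y = s * x := ⟨y / x, by field_simp⟩
  have hE' (i : Fin 2) : E i = x * v i + B i := by simpa using congrArg (fun z => z i) hx
  have hT' (i : Fin 2) : T i = y * v i + B i := by simpa using congrArg (fun z => z i) hy
  have hTB (i : Fin 2) : T i - B i = s * (E i - B i) := by rw [hT', hE', hs]; ring
  have hTP (i : Fin 2) : T i - P i = t * (E i - F i) := by
    simpa using congrArg (fun z => z i) ht
  have hang := inscribed_angle_coords hB hF hE
  rw [← hαdef, ← hβdef, hμ] at hang
  have hang' : (E 0 - B 0) * (E 0 - F 0) + (E 1 - B 1) * (E 1 - F 1) +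
      μ * ((E 0 - B 0) * (E 1 - F 1) - (E 1 - B 1) * (E 0 - F 0)) = 0 := by
    refine (mul_eq_zero.1 ?_).resolve_left hα
    linear_combination hang
  apply key
  rw [hTB, hTB, hTP, hTP]
  linear_combination s * t * hang'
end

section
/- Let n ≥ 3, let l₀, l₁, …, l_{n−1} be lines (one-dimensional affine subspaces) in ℝ², with l_n := l₀, and let C₀, C₁, …, C_{n−1} be points of ℝ² such that for every i, C_i ∉ l_i and C_i ∉ l_{i+1}. Then there exists a nonzero real polynomial q in two variables of total degree at most 2 with q(C₀) = 0 and q(C_{n−1}) = 0, such that for all points B₀, B₁, …, B_n and X: if B_i ∈ l_i for i = 0, …, n−1 and B_n ∈ l₀; B_i ≠ B_{i+1} for all i = 0, …, n−1; C_i lies on the line through B_i and B_{i+1} for all i = 0, …, n−1; X lies on the line through B₀ and B₁ and on the line through B_{n−1} and B_n; and the four points B₀, B₁, B_{n−1}, B_n are not all collinear (so these two lines are distinct and X is their unique intersection point); then q(X) = 0. -/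
open Matrix

/-! ### Projections in homogeneous coordinates -/

/-- Homogeneous coordinates `(x, y, 1)` of a point of the plane. -/
def hat (P : EuclideanSpace ℝ (Fin 2)) : Fin 3 → ℝ := ![P 0, P 1, 1]

/-- The projection from the point `c` onto the line with equation `L`, in homogeneous
coordinates, as a linear map: `v ↦ L(c) v - L(v) c`. -/
def proj (c L : Fin 3 → ℝ) : (Fin 3 → ℝ) →ₗ[ℝ] (Fin 3 → ℝ) where
  toFun v := (L ⬝ᵥ c) • v - (L ⬝ᵥ v) • c
  map_add' v w := by
    simp only [dotProduct_add, smul_add, add_smul]; abel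
  map_smul' r v := by
    ext i; simp [dotProduct_smul]; ring

lemma proj_apply (c L v : Fin 3 → ℝ) : proj c L v = (L ⬝ᵥ c) • v - (L ⬝ᵥ v) • c := rfl

/-- The composite of the projections from `c 0` onto `L 1`, …, from `c k` onto `L (k+1)`. -/
def chain (c L : ℕ → Fin 3 → ℝ) : ℕ → (Fin 3 → ℝ) →ₗ[ℝ] (Fin 3 → ℝ)
  | 0 => proj (c 0) (L 1)
  | k + 1 => proj (c (k + 1)) (L (k + 2)) ∘ₗ chain c L k

lemma dot_proj (c L v : Fin 3 → ℝ) : L ⬝ᵥ proj c L v = 0 := by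
  simp [proj_apply, dotProduct_sub, dotProduct_smul]; ring

lemma dot_chain (c L : ℕ → Fin 3 → ℝ) (k : ℕ) (v : Fin 3 → ℝ) :
    L (k + 1) ⬝ᵥ chain c L k v = 0 := by
  cases k <;> exact dot_proj _ _ _

/-- The kernel of `chain c L k` contains no affine point other than `c 0`. -/
lemma chain_ne_zero (c L : ℕ → Fin 3 → ℝ) (h1 : ∀ k, L k ⬝ᵥ c k ≠ 0)
    (h2 : ∀ k, L (k + 1) ⬝ᵥ c k ≠ 0) (v : Fin 3 → ℝ) (hv : v 2 = 1) (hc : c 0 2 = 1)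
    (hne : v ≠ c 0) (k : ℕ) : chain c L k v ≠ 0 := by
  induction k with
  | zero =>
    intro h
    replace h : (L 1 ⬝ᵥ c 0) • v - (L 1 ⬝ᵥ v) • c 0 = 0 := h
    have h3 := congrFun h 2
    simp only [Pi.sub_apply, Pi.smul_apply, smul_eq_mul, hv, hc, mul_one, Pi.zero_apply] at h3
    rw [← sub_eq_zero.1 h3, ← smul_sub, smul_eq_zero, sub_eq_zero] at h
    exact h.elim (h2 0) hne
  | succ k ih =>
    intro h
    set w := chain c L k v with hw
    replace h : (L (k + 2) ⬝ᵥ c (k + 1)) • w - (L (k + 2) ⬝ᵥ w) • c (k + 1) = 0 := h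
    -- Applying `L (k+1)`, which kills `w` but not `c (k+1)`, shows `L (k+2)` kills `w`.
    have h3 := congrArg (fun u => L (k + 1) ⬝ᵥ u) h
    simp only [dotProduct_sub, dotProduct_smul, hw, dot_chain, dotProduct_zero,
      smul_eq_mul, mul_zero, zero_sub, neg_eq_zero, mul_eq_zero] at h3
    rw [← hw] at h3
    rw [h3.resolve_right (h1 _), zero_smul, sub_zero, smul_eq_zero] at h
    exact h.elim (h2 _) ih

/-! ### Tracking the moving polygon -/

lemma exists_of_mem_line {X P Q : EuclideanSpace ℝ (Fin 2)}
    (h : X ∈ affineSpan ℝ ({P, Q} : Set (EuclideanSpace ℝ (Fin 2)))) :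
    ∃ t : ℝ, hat X = (1 - t) • hat P + t • hat Q := by
  obtain ⟨t, rfl⟩ := mem_affineSpan_pair_iff_exists_lineMap_eq.1 h
  refine ⟨t, ?_⟩
  ext i
  fin_cases i <;> simp [hat, AffineMap.lineMap_apply] <;> ring

/-- If `X` and `C` lie on the line `P Q` and `Q` lies on `L`, then the projection of `X` from
`C` to `L` is `Q` (possibly with factor zero, in particular when `X = C`). -/
lemma proj_of_mem_line {X C P Q : EuclideanSpace ℝ (Fin 2)} {L : Fin 3 → ℝ}
    (hX : X ∈ affineSpan ℝ ({P, Q} : Set (EuclideanSpace ℝ (Fin 2))))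
    (hC : C ∈ affineSpan ℝ ({P, Q} : Set (EuclideanSpace ℝ (Fin 2))))
    (hQ : L ⬝ᵥ hat Q = 0) : ∃ r : ℝ, proj (hat C) L (hat X) = r • hat Q := by
  obtain ⟨s, hs⟩ := exists_of_mem_line hX
  obtain ⟨t, ht⟩ := exists_of_mem_line hC
  refine ⟨(L ⬝ᵥ hat P) * (s - t), ?_⟩
  rw [proj_apply, hs, ht]
  simp only [dotProduct_add, dotProduct_smul, hQ]
  ext i
  simp
  ring

/-- Following a broken line `B 1, …, B (m+1)` through the fixed points, starting from a point
`X` of its zeroth side, the chain of projections sends `X` to a multiple of the last vertex. -/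
lemma chain_track (C B : ℕ → EuclideanSpace ℝ (Fin 2)) (L : ℕ → Fin 3 → ℝ)
    (X : EuclideanSpace ℝ (Fin 2)) (m : ℕ)
    (hB : ∀ k ≤ m, L (k + 1) ⬝ᵥ hat (B (k + 1)) = 0)
    (hC : ∀ k ≤ m, C k ∈ affineSpan ℝ ({B k, B (k + 1)} : Set (EuclideanSpace ℝ (Fin 2))))
    (hX : X ∈ affineSpan ℝ ({B 0, B 1} : Set (EuclideanSpace ℝ (Fin 2)))) :
    ∃ r : ℝ, chain (fun k => hat (C k)) L m (hat X) = r • hat (B (m + 1)) := by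
  induction m with
  | zero => exact proj_of_mem_line hX (hC 0 le_rfl) (hB 0 le_rfl)
  | succ m ih =>
    obtain ⟨r, hr⟩ := ih (fun k hk => hB k (by omega)) (fun k hk => hC k (by omega))
    obtain ⟨s, hs⟩ := proj_of_mem_line (left_mem_affineSpan_pair ℝ _ _) (hC (m + 1) le_rfl)
      (hB (m + 1) le_rfl)
    refine ⟨r * s, ?_⟩
    rw [chain, LinearMap.comp_apply, hr, map_smul, hs, smul_smul]

/-! ### Equations of lines and conics -/

/-- A one-dimensional affine subspace of the plane has a linear equation. -/
lemma exists_equation (l : AffineSubspace ℝ (EuclideanSpace ℝ (Fin 2)))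
    (hl : Module.finrank ℝ l.direction = 1) :
    ∃ L : Fin 3 → ℝ, (L 0 ≠ 0 ∨ L 1 ≠ 0) ∧ ∀ P, P ∈ l ↔ L ⬝ᵥ hat P = 0 := by
  have hne : (l : Set (EuclideanSpace ℝ (Fin 2))).Nonempty := by
    rw [AffineSubspace.nonempty_iff_ne_bot]
    rintro rfl
    rw [AffineSubspace.direction_bot, finrank_bot] at hl
    exact zero_ne_one hl
  obtain ⟨p, hp⟩ := hne
  obtain ⟨⟨d, hd⟩, hd0, hd1⟩ := finrank_eq_one_iff'.1 hl
  have hdd : d 0 ≠ 0 ∨ d 1 ≠ 0 := by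
    by_contra! h
    apply hd0
    ext i
    fin_cases i
    · exact h.1
    · exact h.2
  refine ⟨![d 1, - d 0, d 0 * p 1 - d 1 * p 0], ?_, fun P => ?_⟩
  · simpa using hdd.symm
  rw [← AffineSubspace.vsub_right_mem_direction_iff_mem hp P]
  constructor
  · intro h
    obtain ⟨t, ht⟩ := hd1 ⟨_, h⟩
    have ht' : t • d = P - p := congrArg Subtype.val ht
    have e0 := congrArg (fun v : EuclideanSpace ℝ (Fin 2) => v 0) ht'
    have e1 := congrArg (fun v : EuclideanSpace ℝ (Fin 2) => v 1) ht'
    simp at e0 e1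
    simp [hat, dotProduct, Fin.sum_univ_three]
    linear_combination d 0 * e1 - d 1 * e0
  · intro h
    simp [hat, dotProduct, Fin.sum_univ_three] at h
    have key : ∃ t : ℝ, t • d = P - p := by
      rcases hdd with h0 | h1
      · refine ⟨(P 0 - p 0) / d 0, ?_⟩
        ext i
        fin_cases i
        · simp; field_simp
        · simp; field_simp; linear_combination h
      · refine ⟨(P 1 - p 1) / d 1, ?_⟩
        ext i
        fin_cases i
        · simp; field_simp; linear_combination -h
        · simp; field_simp
    obtain ⟨t, ht⟩ := key
    rw [vsub_eq_sub, ← ht]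
    exact Submodule.smul_mem _ _ hd

/-- The dehomogenization of the quadratic form `v ↦ v ⬝ G v`. -/
lemma exists_quadratic (G : (Fin 3 → ℝ) →ₗ[ℝ] (Fin 3 → ℝ)) :
    ∃ q : MvPolynomial (Fin 2) ℝ, q.totalDegree ≤ 2 ∧
      ∀ P, evalPt q P = hat P ⬝ᵥ G (hat P) := by
  let x : Fin 3 → MvPolynomial (Fin 2) ℝ := ![MvPolynomial.X 0, MvPolynomial.X 1, 1]
  have hx : ∀ i, (x i).totalDegree ≤ 1 := by
    intro i
    fin_cases i <;> simp [x]
  have hev : ∀ P i, evalPt (x i) P = hat P i := by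
    intro P i
    fin_cases i <;> simp [x, evalPt, hat]
  refine ⟨∑ i, ∑ j, MvPolynomial.C (LinearMap.toMatrix' G i j) * (x i * x j), ?_, fun P => ?_⟩
  · refine MvPolynomial.totalDegree_finsetSum_le fun i _ =>
      MvPolynomial.totalDegree_finsetSum_le fun j _ => ?_
    refine (MvPolynomial.totalDegree_mul _ _).trans ?_
    rw [MvPolynomial.totalDegree_C, zero_add]
    exact (MvPolynomial.totalDegree_mul _ _).trans (add_le_add (hx i) (hx j))
  · have h : G (hat P) = LinearMap.toMatrix' G *ᵥ hat P := by
      rw [LinearMap.toMatrix'_mulVec]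
    rw [h]
    simp only [evalPt] at hev
    simp only [evalPt, map_sum, map_mul, MvPolynomial.eval_C, hev, dotProduct, mulVec,
      Finset.mul_sum]
    exact Finset.sum_congr rfl fun i _ => Finset.sum_congr rfl fun j _ => by ring

/-! ### Nondegeneracy of the quadratic form -/

/-- If `w` and `Y` lie on the line `L`, which misses `c`, and `det (Y, c, w) = 0`, then `w` is
proportional to `Y`. -/
lemma eq_smul_of_triple {L c w : Fin 3 → ℝ} {Y : EuclideanSpace ℝ (Fin 2)}
    (hc : L ⬝ᵥ c ≠ 0) (hw : L ⬝ᵥ w = 0) (hY : L ⬝ᵥ hat Y = 0)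
    (h : hat Y ⬝ᵥ (c ⨯₃ w) = 0) : w 0 = w 2 * Y 0 ∧ w 1 = w 2 * Y 1 := by
  simp [hat, dotProduct, Fin.sum_univ_three, cross_apply] at *
  -- Both are components of `c × (L × (Y × w)) = L (c · (Y × w)) - (Y × w) (L · c)`, in which
  -- `L × (Y × w) = 0` because `L` is orthogonal to `Y` and to `w`.
  constructor
  · apply mul_left_cancel₀ hc
    linear_combination -L 1 * h - c 2 * (Y 0 * hw - w 0 * hY) + c 0 * (hw - w 2 * hY)
  · apply mul_left_cancel₀ hc
    linear_combination L 0 * h + c 1 * (hw - w 2 * hY) - c 2 * (Y 1 * hw - w 1 * hY)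

/-- If `w` lies on the line `L`, which misses `c`, and `det (Y, c, w) = 0` for all affine
points `Y` of `L`, then `w = 0`. -/
lemma eq_zero_of_triple {L c w : Fin 3 → ℝ} (hL : L 0 ≠ 0 ∨ L 1 ≠ 0)
    (hc : L ⬝ᵥ c ≠ 0) (hw : L ⬝ᵥ w = 0)
    (h : ∀ Y, L ⬝ᵥ hat Y = 0 → hat Y ⬝ᵥ (c ⨯₃ w) = 0) : w = 0 := by
  have hpos : L 0 ^ 2 + L 1 ^ 2 ≠ 0 := by
    rcases hL with h | h <;> positivity
  -- The points of `L` obtained from the foot of the perpendicular from the origin by moving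
  -- along `L`.
  have key : ∀ t : ℝ, w 0 = w 2 * (-L 2 / (L 0 ^ 2 + L 1 ^ 2) * L 0 + t * L 1) ∧
      w 1 = w 2 * (-L 2 / (L 0 ^ 2 + L 1 ^ 2) * L 1 - t * L 0) := by
    intro t
    let Y : EuclideanSpace ℝ (Fin 2) := !₂[-L 2 / (L 0 ^ 2 + L 1 ^ 2) * L 0 + t * L 1,
      -L 2 / (L 0 ^ 2 + L 1 ^ 2) * L 1 - t * L 0]
    have hY : L ⬝ᵥ hat Y = 0 := by
      simp [hat, Y, dotProduct, Fin.sum_univ_three]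
      field_simp
      ring
    simpa [Y] using eq_smul_of_triple hc hw hY (h Y hY)
  have a := key 0
  have b := key 1
  have e0 : w 2 * L 1 = 0 := by linear_combination a.1 - b.1
  have e1 : w 2 * L 0 = 0 := by linear_combination b.2 - a.2
  have e2 : w 2 = 0 := by
    rcases hL with h | h
    · exact (mul_eq_zero.1 e1).resolve_right h
    · exact (mul_eq_zero.1 e0).resolve_right h
  ext i
  fin_cases i
  · simpa [e2] using a.1
  · simpa [e2] using a.2
  · exact e2

/-- The conic `det (v, c, N v) = 0` is not the whole plane: it is enough that `N` has its image
in a line `L` missing `c`, and that `N c ≠ 0`. -/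
lemma exists_form_ne_zero {L : Fin 3 → ℝ} (hL : L 0 ≠ 0 ∨ L 1 ≠ 0)
    (N : (Fin 3 → ℝ) →ₗ[ℝ] (Fin 3 → ℝ)) (hN : ∀ v, L ⬝ᵥ N v = 0)
    (Z : EuclideanSpace ℝ (Fin 2)) (hZ : L ⬝ᵥ hat Z ≠ 0) (hNZ : N (hat Z) ≠ 0) :
    ∃ P, hat P ⬝ᵥ (hat Z ⨯₃ N (hat P)) ≠ 0 := by
  by_contra! h
  refine hNZ (eq_zero_of_triple hL hZ (hN _) fun Y _ => ?_)
  -- Polarization: compare the values of the form at `Y` and at the midpoint of `Y` and `Z`.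
  have h1 := h Y
  have h2 := h ((1 / 2 : ℝ) • (Y + Z))
  have e : hat ((1 / 2 : ℝ) • (Y + Z)) = (1 / 2 : ℝ) • (hat Y + hat Z) := by
    ext i
    fin_cases i <;> simp [hat] <;> ring
  rw [e] at h2
  simp only [map_smul, map_add, dotProduct_smul, smul_dotProduct, dotProduct_add,
    add_dotProduct, dot_self_cross, h1, smul_eq_mul] at h2
  linarith

/-! ### The conic -/

/-- Theorem 5.2 (generalized Maclaurin–Braikenridge conic generation): given lines
`l 0, …, l (n-1)` (with `l n := l 0`) and points `C 0, …, C (n-1)` with `C i ∉ l i` and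
`C i ∉ l (i+1)`, as the points `B i ∈ l i` (and `B n ∈ l 0`) move so that each side
`B i B (i+1)` passes through `C i`, the intersection point `X` of the lines `B 0 B 1` and
`B (n-1) B n` stays on a conic passing through `C 0` and `C (n-1)`. -/
theorem maclaurin_braikenridge
    (n : ℕ) [NeZero n] (hn : 3 ≤ n)
    (l : Fin n → AffineSubspace ℝ (EuclideanSpace ℝ (Fin 2)))
    (hl : ∀ i : Fin n, Module.finrank ℝ (l i).direction = 1)
    (C : Fin n → EuclideanSpace ℝ (Fin 2))
    (hC : ∀ i : Fin n, C i ∉ l i ∧ C i ∉ l (i + 1)) :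
    ∃ q : MvPolynomial (Fin 2) ℝ, q ≠ 0 ∧ q.totalDegree ≤ 2 ∧
      evalPt q (C 0) = 0 ∧ evalPt q (C ⟨n - 1, by omega⟩) = 0 ∧
      ∀ (B : Fin (n + 1) → EuclideanSpace ℝ (Fin 2)) (X : EuclideanSpace ℝ (Fin 2)),
        (∀ i : Fin n, B i.castSucc ∈ l i) →
        B (Fin.last n) ∈ l 0 →
        (∀ i : Fin n, B i.castSucc ≠ B i.succ) →
        (∀ i : Fin n, C i ∈ affineSpan ℝ ({B i.castSucc, B i.succ} :
            Set (EuclideanSpace ℝ (Fin 2)))) →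
        X ∈ affineSpan ℝ ({B 0, B 1} : Set (EuclideanSpace ℝ (Fin 2))) →
        X ∈ affineSpan ℝ ({B ⟨n - 1, by omega⟩, B (Fin.last n)} :
            Set (EuclideanSpace ℝ (Fin 2))) →
        ¬ Collinear ℝ ({B 0, B 1, B ⟨n - 1, by omega⟩, B (Fin.last n)} :
            Set (EuclideanSpace ℝ (Fin 2))) →
        evalPt q X = 0 := by
  choose L hL0 hL using fun i => exists_equation (l i) (hl i)
  by_cases hCC : C 0 = C ⟨n - 1, by omega⟩
  · refine ⟨MvPolynomial.X 0 - MvPolynomial.C (C 0 0), ?_, ?_, ?_, ?_, ?_⟩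
    · intro h
      have := congrArg (MvPolynomial.eval (fun _ => C 0 0 + 1)) h
      simp at this
    · refine (MvPolynomial.totalDegree_sub _ _).trans ?_
      simp
    · simp [evalPt]
    · simp [evalPt, ← hCC]
    · intro B X _ _ _ hCB hX0 hX1 hcol
      have h0 := hCB 0
      have h1 := hCB ⟨n - 1, by omega⟩
      rw [← hCC] at h1
      have i0 : (0 : Fin n).castSucc = 0 := rfl
      have i1 : (0 : Fin n).succ = 1 := by
        ext; simp [Nat.mod_eq_of_lt (show 1 < n + 1 by omega)]
      have i2 : (⟨n - 1, by omega⟩ : Fin n).castSucc = ⟨n - 1, by omega⟩ := rfl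
      have i3 : (⟨n - 1, by omega⟩ : Fin n).succ = Fin.last n := by
        ext; simp; omega
      rw [i0, i1] at h0
      rw [i2, i3] at h1
      have hXC : X = C 0 := by
        by_contra hne
        apply hcol
        have c0 := collinear_insert_insert_of_mem_affineSpan_pair hX0 h0
        have c1 := collinear_insert_insert_of_mem_affineSpan_pair hX1 h1
        have m0 := c0.mem_affineSpan_of_mem_of_ne (p₁ := X) (p₂ := C 0) (p₃ := B 0)
          (by simp) (by simp) (by simp) hne
        have m1 := c0.mem_affineSpan_of_mem_of_ne (p₁ := X) (p₂ := C 0) (p₃ := B 1)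
          (by simp) (by simp) (by simp) hne
        have m2 := c1.mem_affineSpan_of_mem_of_ne (p₁ := X) (p₂ := C 0)
          (p₃ := B ⟨n - 1, by omega⟩) (by simp) (by simp) (by simp) hne
        have m3 := c1.mem_affineSpan_of_mem_of_ne (p₁ := X) (p₂ := C 0)
          (p₃ := B (Fin.last n)) (by simp) (by simp) (by simp) hne
        have c3 := collinear_insert_insert_insert_of_mem_affineSpan_pair m1 m2 m3
        refine ((collinear_insert_iff_of_mem_affineSpan
          (affineSpan_mono ℝ ?_ m0)).2 c3).subset ?_
        · intro P hP
          simp only [Set.mem_insert_iff, Set.mem_singleton_iff] at hP ⊢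
          tauto
        · intro P hP
          simp only [Set.mem_insert_iff, Set.mem_singleton_iff] at hP ⊢
          tauto
      simp [evalPt, hXC]
  · obtain ⟨m, rfl⟩ : ∃ m, n = m + 2 := ⟨n - 2, by omega⟩
    have hlast : (⟨m + 2 - 1, by omega⟩ : Fin (m + 2)) = Fin.ofNat (m + 2) (m + 1) := by
      ext; simp
    have hsucc : ∀ k, Fin.ofNat (m + 2) (k + 1) = Fin.ofNat (m + 2) k + 1 := by
      intro k; ext; simp [Fin.val_add]
    let C' : ℕ → EuclideanSpace ℝ (Fin 2) := fun k => C (Fin.ofNat (m + 2) k)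
    let L' : ℕ → Fin 3 → ℝ := fun k => L (Fin.ofNat (m + 2) k)
    have h1 : ∀ k, L' k ⬝ᵥ hat (C' k) ≠ 0 := fun k => mt (hL _ _).2 (hC _).1
    have h2 : ∀ k, L' (k + 1) ⬝ᵥ hat (C' k) ≠ 0 := fun k => by
      simp only [L', hsucc]
      exact mt (hL _ _).2 (hC _).2
    set N := chain (fun k => hat (C' k)) L' m with hN
    have hNL : ∀ v, L' (m + 1) ⬝ᵥ N v = 0 := dot_chain _ _ _
    rw [hlast] at hCC ⊢
    have hne : hat (C' (m + 1)) ≠ hat (C' 0) := by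
      intro h
      apply hCC
      ext i
      fin_cases i
      · exact (congrFun h 0).symm
      · exact (congrFun h 1).symm
    have hNC : N (hat (C' (m + 1))) ≠ 0 := chain_ne_zero _ _ h1 h2 _ rfl rfl hne m
    obtain ⟨q, hq, hqe⟩ := exists_quadratic (crossProduct (hat (C' (m + 1))) ∘ₗ N)
    simp only [LinearMap.comp_apply] at hqe
    refine ⟨q, ?_, hq, ?_, ?_, ?_⟩
    · rintro rfl
      obtain ⟨P, hP⟩ := exists_form_ne_zero (hL0 _) N hNL _ (h1 (m + 1)) hNC
      rw [← hqe] at hP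
      simp [evalPt] at hP
    · rw [hqe]
      -- `N` kills `C 0` because its first factor is the projection from `C 0`.
      have : N (hat (C 0)) = 0 := by
        have h0 : proj (hat (C 0)) (L' 1) (hat (C 0)) = 0 := by simp [proj_apply]
        have : ∀ k, chain (fun k => hat (C' k)) L' k (hat (C 0)) = 0 := by
          intro k
          induction k with
          | zero => exact h0
          | succ k ih => rw [chain, LinearMap.comp_apply, ih, map_zero]
        exact this m
      simp [this]
    · rw [hqe]
      exact dot_self_cross _ _
    · intro B X hB _ _ hCB hX0 hX1 _
      have hBs : ∀ k (hk : k < m + 2), (Fin.ofNat (m + 2) k).castSucc = Fin.ofNat (m + 3) k := by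
        intro k hk; ext; simp [Nat.mod_eq_of_lt hk, Nat.mod_eq_of_lt (show k < m + 3 by omega)]
      have hBs' : ∀ k (hk : k < m + 2),
          (Fin.ofNat (m + 2) k).succ = Fin.ofNat (m + 3) (k + 1) := by
        intro k hk; ext
        simp [Nat.mod_eq_of_lt hk, Nat.mod_eq_of_lt (show k + 1 < m + 3 by omega)]
      let B' : ℕ → EuclideanSpace ℝ (Fin 2) := fun k => B (Fin.ofNat (m + 3) k)
      have hC' : ∀ k < m + 2, C' k ∈ affineSpan ℝ ({B' k, B' (k + 1)} :
          Set (EuclideanSpace ℝ (Fin 2))) := by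
        intro k hk
        have := hCB (Fin.ofNat (m + 2) k)
        rwa [hBs k hk, hBs' k hk] at this
      have hB' : ∀ k < m + 2, L' k ⬝ᵥ hat (B' k) = 0 := by
        intro k hk
        have := (hL _ _).1 (hB (Fin.ofNat (m + 2) k))
        rwa [hBs k hk] at this
      obtain ⟨r, hr⟩ := chain_track C' B' L' X m (fun k hk => hB' (k + 1) (by omega))
        (fun k hk => hC' k (by omega)) hX0
      have j1 : (⟨m + 2 - 1, by omega⟩ : Fin (m + 3)) = Fin.ofNat (m + 3) (m + 1) := by
        ext; simp [Nat.mod_eq_of_lt (show m + 1 < m + 3 by omega)]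
      have j2 : Fin.last (m + 2) = Fin.ofNat (m + 3) (m + 2) := by
        ext; simp
      rw [j1, j2] at hX1
      obtain ⟨s, hs⟩ := exists_of_mem_line hX1
      obtain ⟨t, ht⟩ := exists_of_mem_line (hC' (m + 1) (by omega))
      rw [hqe, hr, ht, hs]
      simp [cross_apply, dotProduct, Fin.sum_univ_three, B']
      ring
end

section
/- Let A₀, A₁, A₂, A₃, A₄, A₅ be six pairwise distinct points in ℝ² such that no two consecutive vertices coincide and the three pairs of opposite sides of the hexagon A₀A₁A₂A₃A₄A₅ intersect: i.e., there exist points P, Q, R with P on line A₀A₁ and on line A₃A₄, Q on line A₁A₂ and on line A₄A₅, R on line A₂A₃ and on line A₅A₀, where in each pair the two lines are distinct. If P, Q, R are collinear, then there exists a nonzero real polynomial q in two variables of total degree at most 2 such that q(A_i) = 0 for all i = 0, …, 5. -/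
open scoped Matrix

/-- The vector of homogeneous coordinates of the point `(x, y)`. -/
def homog (x y : ℝ) : Fin 3 → ℝ := ![x, y, 1]

/-- The matrix of the values at the six points `(x i, y i)` of the monomials of degree at most `2`. -/
def veronese (x y : Fin 6 → ℝ) : Matrix (Fin 6) (Fin 6) ℝ :=
  Matrix.of fun i => ![x i ^ 2, x i * y i, y i ^ 2, x i, y i, 1]

/-- The meet of the lines `ab` and `cd`, in homogeneous coordinates; it is zero when the two lines
coincide. -/
def meet (a b c d : Fin 3 → ℝ) : Fin 3 → ℝ := (a ⨯₃ b) ⨯₃ (c ⨯₃ d)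

set_option maxHeartbeats 4000000 in
/-- Pascal's theorem and its converse as a polynomial identity: both sides are alternating in the
six points, quadratic in each, and vanish exactly when the hexagon is inscribed in a conic. -/
theorem det_veronese (x y : Fin 6 → ℝ) :
    (veronese x y).det =
      meet (homog (x 0) (y 0)) (homog (x 1) (y 1)) (homog (x 3) (y 3)) (homog (x 4) (y 4)) ⬝ᵥ
        (meet (homog (x 1) (y 1)) (homog (x 2) (y 2)) (homog (x 4) (y 4)) (homog (x 5) (y 5)) ⨯₃
        meet (homog (x 2) (y 2)) (homog (x 3) (y 3)) (homog (x 5) (y 5)) (homog (x 0) (y 0))) := by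
  simp [veronese, meet, homog, cross_apply, Matrix.det_succ_row_zero, Fin.sum_univ_succ,
    Fin.succAbove]
  generalize x 0 = x0, x 1 = x1, x 2 = x2, x 3 = x3, x 4 = x4, x 5 = x5
  generalize y 0 = y0, y 1 = y1, y 2 = y2, y 3 = y3, y 4 = y4, y 5 = y5
  ring

/-- A point of the line through `X` and `Y` is orthogonal, in homogeneous coordinates, to the cross
product representing that line. -/
theorem line_eq {P X Y : EuclideanSpace ℝ (Fin 2)}
    (h : P ∈ affineSpan ℝ ({X, Y} : Set (EuclideanSpace ℝ (Fin 2)))) :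
    (homog (X 0) (X 1) ⨯₃ homog (Y 0) (Y 1)) ⬝ᵥ homog (P 0) (P 1) = 0 := by
  obtain ⟨t, rfl⟩ := mem_affineSpan_pair_iff_exists_lineMap_eq.1 h
  simp [homog, cross_apply, AffineMap.lineMap_apply]
  ring

/-- The meet of two lines is a multiple of any affine point common to both; the factor `k` is
`0` when they coincide. -/
theorem meet_eq {P X Y Z W : EuclideanSpace ℝ (Fin 2)}
    (h₁ : P ∈ affineSpan ℝ ({X, Y} : Set (EuclideanSpace ℝ (Fin 2))))
    (h₂ : P ∈ affineSpan ℝ ({Z, W} : Set (EuclideanSpace ℝ (Fin 2)))) :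
    ∃ k : ℝ, meet (homog (X 0) (X 1)) (homog (Y 0) (Y 1)) (homog (Z 0) (Z 1))
      (homog (W 0) (W 1)) = k • homog (P 0) (P 1) := by
  have e₁ := line_eq h₁
  have e₂ := line_eq h₂
  unfold meet
  generalize homog (X 0) (X 1) ⨯₃ homog (Y 0) (Y 1) = l at *
  generalize homog (Z 0) (Z 1) ⨯₃ homog (W 0) (W 1) = m at *
  simp only [dotProduct, Fin.sum_univ_three] at e₁ e₂
  simp [homog] at e₁ e₂
  -- `P` has last homogeneous coordinate `1`, so the factor is the last coordinate of the meet.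
  refine ⟨l 0 * m 1 - l 1 * m 0, ?_⟩
  ext i
  fin_cases i
  · simp [homog, cross_apply]
    linear_combination l 1 * e₂ - m 1 * e₁
  · simp [homog, cross_apply]
    linear_combination m 0 * e₁ - l 0 * e₂
  · simp [homog, cross_apply]

theorem triple_eq_zero {P Q R : EuclideanSpace ℝ (Fin 2)}
    (h : Collinear ℝ ({P, Q, R} : Set (EuclideanSpace ℝ (Fin 2)))) :
    homog (P 0) (P 1) ⬝ᵥ (homog (Q 0) (Q 1) ⨯₃ homog (R 0) (R 1)) = 0 := by
  obtain ⟨v, hv⟩ := (collinear_iff_of_mem (p₀ := P) (by simp)).1 h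
  obtain ⟨s, rfl⟩ := hv Q (by simp)
  obtain ⟨t, rfl⟩ := hv R (by simp)
  simp [homog, cross_apply]
  ring

open MvPolynomial in
/-- The polynomial of degree at most `2` with the six given coefficients. -/
noncomputable def conicPoly (v : Fin 6 → ℝ) : MvPolynomial (Fin 2) ℝ :=
  C (v 0) * X 0 ^ 2 + C (v 1) * (X 0 * X 1) + C (v 2) * X 1 ^ 2 + C (v 3) * X 0 + C (v 4) * X 1 +
    C (v 5)

theorem eval_conicPoly (v : Fin 6 → ℝ) (f : Fin 2 → ℝ) :
    MvPolynomial.eval f (conicPoly v) = v 0 * f 0 ^ 2 + v 1 * (f 0 * f 1) + v 2 * f 1 ^ 2 +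
      v 3 * f 0 + v 4 * f 1 + v 5 := by
  simp [conicPoly]

theorem totalDegree_conicPoly (v : Fin 6 → ℝ) : (conicPoly v).totalDegree ≤ 2 := by
  have hC (a : ℝ) {p : MvPolynomial (Fin 2) ℝ} (hp : p.totalDegree ≤ 2) :
      (MvPolynomial.C a * p).totalDegree ≤ 2 :=
    (MvPolynomial.totalDegree_mul _ _).trans (by simpa using hp)
  have hadd {p q : MvPolynomial (Fin 2) ℝ} (hp : p.totalDegree ≤ 2) (hq : q.totalDegree ≤ 2) :
      (p + q).totalDegree ≤ 2 :=
    (MvPolynomial.totalDegree_add _ _).trans (max_le hp hq)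
  refine hadd (hadd (hadd (hadd (hadd (hC _ ?_) (hC _ ?_)) (hC _ ?_)) (hC _ ?_)) (hC _ ?_)) ?_
  · simp
  · exact (MvPolynomial.totalDegree_mul _ _).trans (by simp)
  all_goals simp

theorem conicPoly_ne_zero {v : Fin 6 → ℝ} (hv : v ≠ 0) : conicPoly v ≠ 0 := by
  intro h
  have e (a b : ℝ) : v 0 * a ^ 2 + v 1 * (a * b) + v 2 * b ^ 2 + v 3 * a + v 4 * b + v 5 = 0 := by
    have := eval_conicPoly v ![a, b]
    simpa [h] using this.symm
  -- The six coefficients are determined by the values at these six points.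
  have e₁ := e 0 0
  have e₂ := e 1 0
  have e₃ := e (-1) 0
  have e₄ := e 0 1
  have e₅ := e 0 (-1)
  have e₆ := e 1 1
  apply hv
  ext i
  fin_cases i <;> simp <;> linarith

/-- The Braikenridge–Maclaurin theorem (converse of Pascal's theorem): if the three pairs
of opposite sides of a hexagon `A 0 … A 5` with pairwise distinct vertices meet in points
`P`, `Q`, `R` (each pair consisting of two distinct lines), and `P`, `Q`, `R` are
collinear, then the six vertices lie on a conic. -/
theorem braikenridge_maclaurin
    (A : Fin 6 → EuclideanSpace ℝ (Fin 2)) (hA : Function.Injective A)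
    (P Q R : EuclideanSpace ℝ (Fin 2))
    (hP₁ : P ∈ affineSpan ℝ ({A 0, A 1} : Set (EuclideanSpace ℝ (Fin 2))))
    (hP₂ : P ∈ affineSpan ℝ ({A 3, A 4} : Set (EuclideanSpace ℝ (Fin 2))))
    (hPl : affineSpan ℝ ({A 0, A 1} : Set (EuclideanSpace ℝ (Fin 2))) ≠
        affineSpan ℝ ({A 3, A 4} : Set (EuclideanSpace ℝ (Fin 2))))
    (hQ₁ : Q ∈ affineSpan ℝ ({A 1, A 2} : Set (EuclideanSpace ℝ (Fin 2))))
    (hQ₂ : Q ∈ affineSpan ℝ ({A 4, A 5} : Set (EuclideanSpace ℝ (Fin 2))))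
    (hQl : affineSpan ℝ ({A 1, A 2} : Set (EuclideanSpace ℝ (Fin 2))) ≠
        affineSpan ℝ ({A 4, A 5} : Set (EuclideanSpace ℝ (Fin 2))))
    (hR₁ : R ∈ affineSpan ℝ ({A 2, A 3} : Set (EuclideanSpace ℝ (Fin 2))))
    (hR₂ : R ∈ affineSpan ℝ ({A 5, A 0} : Set (EuclideanSpace ℝ (Fin 2))))
    (hRl : affineSpan ℝ ({A 2, A 3} : Set (EuclideanSpace ℝ (Fin 2))) ≠
        affineSpan ℝ ({A 5, A 0} : Set (EuclideanSpace ℝ (Fin 2))))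
    (hPQR : Collinear ℝ ({P, Q, R} : Set (EuclideanSpace ℝ (Fin 2)))) :
    ∃ q : MvPolynomial (Fin 2) ℝ, q ≠ 0 ∧ q.totalDegree ≤ 2 ∧
      ∀ i : Fin 6, evalPt q (A i) = 0 := by
  have hdet : (veronese (fun i => A i 0) (fun i => A i 1)).det = 0 := by
    rw [det_veronese]
    obtain ⟨a, ha⟩ := meet_eq hP₁ hP₂
    obtain ⟨b, hb⟩ := meet_eq hQ₁ hQ₂
    obtain ⟨c, hc⟩ := meet_eq hR₁ hR₂
    rw [ha, hb, hc]
    simp [triple_eq_zero hPQR]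
  obtain ⟨v, hv, hMv⟩ := Matrix.exists_mulVec_eq_zero_iff.2 hdet
  refine ⟨conicPoly v, conicPoly_ne_zero hv, totalDegree_conicPoly v, fun i => ?_⟩
  have h := congrFun hMv i
  simp [veronese, Matrix.mulVec, dotProduct, Fin.sum_univ_succ] at h
  rw [evalPt, eval_conicPoly]
  linear_combination h
end

section
/- Let n ≥ 3 be an integer and a > 0. Let O, A₀, A₁ be points in ℝ² with dist(O,A₀) = dist(O,A₁) = a/sin(π/n) and dist(A₀,A₁) = 2a (so that O, A₀, A₁ are the center and two adjacent vertices of a regular n-gon with side length 2a). Let E be the midpoint of A₀ and A₁, let C be the orthogonal projection of E onto the line through O and A₀, and let D be the orthogonal projection of C onto the line through A₀ and A₁. Then dist(E,D) = a·cos²(π/n) and dist(A₁,D) = a·(1 + cos²(π/n)). -/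
/-!
Take `A₀` as origin and put `u = O - A₀`, `v = A₁ - A₀`, `s = sin (π / n)`. The side lengths give
`⟪u, u⟫ = a² / s²`, `⟪v, v⟫ = 4 a²` and, since the triangle is isosceles, `⟪u, v⟫ = 2 a²`.
With `E = A₀ + v / 2`, the two perpendicularity conditions are linear equations for the positions
of the feet, with solutions `C = A₀ + s² u` and `D = A₀ + (s² / 2) v`. Hence
`E - D = ((1 - s²) / 2) v` and `A₁ - D = (1 - s² / 2) v`, and `v` has length `2 a`.
-/

open Real
open scoped InnerProductSpace

/-- Appendix A: in the isoceles triangle `O A₀ A₁` representing the center and one side of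
a regular `n`-gon with side length `2a`, if `E` is the midpoint of `A₀A₁`, `C` is the foot
of the perpendicular from `E` to line `OA₀`, and `D` is the foot of the perpendicular from
`C` to line `A₀A₁`, then `|ED| = a·cos²(π/n)` and `|A₁D| = a·(1 + cos²(π/n))`. -/
theorem appendix_A_distances
    (n : ℕ) (hn : 3 ≤ n) (a : ℝ) (ha : 0 < a)
    (O A₀ A₁ E C D : EuclideanSpace ℝ (Fin 2))
    (hOA₀ : dist O A₀ = a / sin (π / n))
    (hOA₁ : dist O A₁ = a / sin (π / n))
    (hA₀A₁ : dist A₀ A₁ = 2 * a)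
    (hE : E = midpoint ℝ A₀ A₁)
    (hCmem : C ∈ affineSpan ℝ ({O, A₀} : Set (EuclideanSpace ℝ (Fin 2))))
    (hCperp : ⟪E - C, A₀ - O⟫_ℝ = 0)
    (hDmem : D ∈ affineSpan ℝ ({A₀, A₁} : Set (EuclideanSpace ℝ (Fin 2))))
    (hDperp : ⟪C - D, A₁ - A₀⟫_ℝ = 0) :
    dist E D = a * cos (π / n) ^ 2 ∧ dist A₁ D = a * (1 + cos (π / n) ^ 2) := by
  have hn0 : (3 : ℝ) ≤ n := by exact_mod_cast hn
  have hs : 0 < sin (π / n) := by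
    apply sin_pos_of_pos_of_lt_pi
    · positivity
    · rw [div_lt_iff₀ (by linarith)]
      nlinarith [pi_pos]
  have hsc := sin_sq_add_cos_sq (π / n)
  set s := sin (π / n)
  set c := cos (π / n)
  rw [mem_affineSpan_pair_iff_exists_lineMap_eq] at hCmem hDmem
  obtain ⟨r, rfl⟩ := hCmem
  obtain ⟨k, rfl⟩ := hDmem
  obtain ⟨u, rfl⟩ : ∃ u, O = A₀ + u := ⟨O - A₀, by abel⟩
  obtain ⟨v, rfl⟩ : ∃ v, A₁ = A₀ + v := ⟨A₁ - A₀, by abel⟩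
  have hu : ‖u‖ = a / s := by
    rw [← hOA₀, dist_eq_norm, add_sub_cancel_left]
  have huv : ‖u - v‖ = a / s := by
    rw [← hOA₁, dist_eq_norm, add_sub_add_left_eq_sub]
  have hv : ‖v‖ = 2 * a := by
    rw [← hA₀A₁, dist_eq_norm', add_sub_cancel_left]
  have hin : ⟪u, v⟫_ℝ = 2 * a ^ 2 := by
    have h := norm_sub_sq_real u v
    rw [hu, huv, hv] at h
    linarith
  have hE' : E = A₀ + (1 / 2 : ℝ) • v := by
    rw [hE, midpoint_eq_smul_add, invOf_eq_inv]
    module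
  subst hE'
  have hC : AffineMap.lineMap (A₀ + u) A₀ r = A₀ + (1 - r) • u := by
    rw [AffineMap.lineMap_apply_module]
    module
  have hD : AffineMap.lineMap A₀ (A₀ + v) k = A₀ + k • v := by
    rw [AffineMap.lineMap_apply_module]
    module
  rw [hC] at hCperp hDperp
  rw [hD] at hDperp ⊢
  have ha2 : a ^ 2 ≠ 0 := by positivity
  have hr : 1 - r = s ^ 2 := by
    simp only [add_sub_add_left_eq_sub, sub_add_cancel_left, inner_neg_right, inner_sub_left,
      real_inner_smul_left, real_inner_self_eq_norm_sq, real_inner_comm u v, hin, hu] at hCperp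
    field_simp at hCperp
    apply mul_left_cancel₀ ha2
    linarith
  have hk : k = s ^ 2 / 2 := by
    simp only [add_sub_add_left_eq_sub, add_sub_cancel_left, inner_sub_left,
      real_inner_smul_left, real_inner_self_eq_norm_sq, hin, hv, hr] at hDperp
    apply mul_left_cancel₀ ha2
    linarith
  constructor
  · have h : A₀ + (1 / 2 : ℝ) • v - (A₀ + k • v) = (c ^ 2 / 2) • v := by
      rw [show c ^ 2 / 2 = 1 / 2 - k by linarith]
      module
    rw [dist_eq_norm, h, norm_smul, hv, Real.norm_of_nonneg (by positivity)]
    ring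
  · have h : A₀ + v - (A₀ + k • v) = ((1 + c ^ 2) / 2) • v := by
      rw [show (1 + c ^ 2) / 2 = 1 - k by linarith]
      module
    rw [dist_eq_norm, h, norm_smul, hv, Real.norm_of_nonneg (by positivity)]
    ring
end

section
/- Let n ≥ 3 be an integer, R > 0, and in ℝ² let O = (0,0) and A_k = (R·cos(2πk/n), R·sin(2πk/n)) for k = 0, 1, 2. Set a = R·sin(π/n) (so each side A₀A₁ and A₁A₂ has length 2a), and let E be the midpoint of A₀ and A₁. Let 0 < x ≤ a, and define B₀ = A₀ + (x/(2a))·(A₁ − A₀) and B₁ = A₁ + (x/(2a))·(A₂ − A₁). Let C be a point that is collinear with O and E and collinear with B₀ and B₁. Then dist(C,E) = x(a−x)·sin(2π/n) / (2a − 2x·sin²(π/n)). -/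
open Real

/-!
Write `φ = π / n` and use the orthonormal frame `u = (cos φ, sin φ)`, `v = (-sin φ, cos φ)`, in
which the line `OE` is the `u`-axis.  In this frame `E = (R cos φ, 0)`, `B₀ = (R cos φ, x - a)`,
`B₁ = (R cos φ - x sin 2φ, a + x cos 2φ)`, and collinearity with `O` and `E` forces `C = (d, 0)`.
Collinearity of `B₀`, `B₁`, `C` is then the single linear equation
`(2a - 2x sin² φ) (d - R cos φ) = -x (a - x) sin 2φ`, whose leading coefficient is positive since
`x ≤ a` and `sin² φ < 1`; the right-hand side is nonpositive since `x ≤ a` and `2φ ≤ π`.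
-/

lemma cross_eq_of_collinear {P Q S : EuclideanSpace ℝ (Fin 2)}
    (h : Collinear ℝ ({P, Q, S} : Set (EuclideanSpace ℝ (Fin 2)))) :
    (Q 0 - P 0) * (S 1 - P 1) = (Q 1 - P 1) * (S 0 - P 0) := by
  obtain ⟨w, hw⟩ := (collinear_iff_of_mem (p₀ := P) (by simp)).1 h
  obtain ⟨q, rfl⟩ := hw Q (by simp)
  obtain ⟨r, rfl⟩ := hw S (by simp)
  simp
  ring

/-- Example 1 (the distance computation): let `A 0, A 1, A 2` be three consecutive vertices
of a regular `n`-gon with center `O = (0,0)` and circumradius `R`, side length `2a` where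
`a = R·sin(π/n)`, let `E` be the midpoint of `A 0 A 1`, let `B₀, B₁` be the points on the
sides `A 0 A 1` and `A 1 A 2` at distance `x` from `A 0` and `A 1` respectively, and let
`C` be collinear with `O, E` and with `B₀, B₁`.  Then
`dist C E = x(a−x)·sin(2π/n) / (2a − 2x·sin²(π/n))`. -/
theorem example_one_distance
    (n : ℕ) (hn : 3 ≤ n) (R : ℝ) (hR : 0 < R)
    (O : EuclideanSpace ℝ (Fin 2)) (hO : O = 0)
    (A : Fin 3 → EuclideanSpace ℝ (Fin 2))
    (hA : ∀ k : Fin 3,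
        A k 0 = R * cos (2 * π * (k : ℕ) / n) ∧ A k 1 = R * sin (2 * π * (k : ℕ) / n))
    (a : ℝ) (ha : a = R * sin (π / n))
    (x : ℝ) (hx : 0 < x) (hxa : x ≤ a)
    (E : EuclideanSpace ℝ (Fin 2)) (hE : E = midpoint ℝ (A 0) (A 1))
    (B₀ : EuclideanSpace ℝ (Fin 2)) (hB₀ : B₀ = A 0 + (x / (2 * a)) • (A 1 - A 0))
    (B₁ : EuclideanSpace ℝ (Fin 2)) (hB₁ : B₁ = A 1 + (x / (2 * a)) • (A 2 - A 1))
    (C : EuclideanSpace ℝ (Fin 2))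
    (hC₁ : Collinear ℝ ({O, E, C} : Set (EuclideanSpace ℝ (Fin 2))))
    (hC₂ : Collinear ℝ ({B₀, B₁, C} : Set (EuclideanSpace ℝ (Fin 2)))) :
    dist C E = x * (a - x) * sin (2 * π / n) / (2 * a - 2 * x * sin (π / n) ^ 2) := by
  have hn' : (3 : ℝ) ≤ n := by exact_mod_cast hn
  have hn0 : (0 : ℝ) < n := by linarith
  have hφ0 : 0 < π / n := by positivity
  have hφ1 : π / n < π / 2 := by
    apply div_lt_div_of_pos_left pi_pos (by norm_num); linarith
  have e2 : 2 * π / n = 2 * (π / n) := by ring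
  obtain ⟨hA00, hA01⟩ := hA 0
  obtain ⟨hA10, hA11⟩ := hA 1
  obtain ⟨hA20, hA21⟩ := hA 2
  have e0 : 2 * π * ((0 : Fin 3) : ℕ) / n = 0 := by simp
  have e1 : 2 * π * ((1 : Fin 3) : ℕ) / n = 2 * (π / n) := by simp; ring
  have e3 : 2 * π * ((2 : Fin 3) : ℕ) / n = 2 * (2 * (π / n)) := by simp; ring
  have hs : 0 < sin (π / n) := sin_pos_of_pos_of_lt_pi hφ0 (by linarith [pi_pos])
  have hc : 0 < cos (π / n) := cos_pos_of_mem_Ioo ⟨by linarith, hφ1⟩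
  have hsc := sin_sq_add_cos_sq (π / n)
  rw [e0] at hA00 hA01
  rw [e1] at hA10 hA11
  rw [e3] at hA20 hA21
  rw [cos_two_mul, cos_two_mul] at hA20
  rw [sin_two_mul, cos_two_mul, sin_two_mul] at hA21
  rw [cos_two_mul] at hA10
  rw [sin_two_mul] at hA11
  rw [cos_zero, mul_one] at hA00
  rw [sin_zero, mul_zero] at hA01
  rw [e2, sin_two_mul]
  generalize sin (π / n) = s at *
  generalize cos (π / n) = c at *
  have ha0 : 0 < a := by rw [ha]; positivity
  have hc2 : c ^ 2 = 1 - s ^ 2 := by linarith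
  -- `htR` replaces the ratio `x / (2a)` by a polynomial relation between `t` and `R`, `s`, `x`.
  obtain ⟨t, ht⟩ : ∃ t, t = x / (2 * a) := ⟨_, rfl⟩
  have htR : 2 * t * R * s = x := by rw [ht, ha]; field_simp
  rw [← ht] at hB₀ hB₁
  have hE0 : E 0 = R * c * c := by
    rw [hE, midpoint_eq_smul_add]; simp [hA00, hA10]; ring
  have hE1 : E 1 = R * c * s := by
    rw [hE, midpoint_eq_smul_add]; simp [hA01, hA11]; ring
  -- `B₀` and `B₁` are written through their coordinates in the frame `(c, s)`, `(-s, c)`.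
  have hB00 : B₀ 0 = R * c * c - (x - a) * s := by
    rw [hB₀]; simp [hA00, hA10]; rw [ha]
    linear_combination (2 * t * R - R) * hc2 - s * htR
  have hB01 : B₀ 1 = R * c * s + (x - a) * c := by
    rw [hB₀]; simp [hA01, hA11]; rw [ha]
    linear_combination c * htR
  have hB10 : B₁ 0 = (R * c - 2 * x * s * c) * c - (a + x * (1 - 2 * s ^ 2)) * s := by
    rw [hB₁]; simp [hA10, hA20]; rw [ha, ← htR]
    grind
  have hB11 : B₁ 1 = (R * c - 2 * x * s * c) * s + (a + x * (1 - 2 * s ^ 2)) * c := by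
    rw [hB₁]; simp [hA11, hA21]; rw [ha, ← htR]
    grind
  have h1 := cross_eq_of_collinear hC₁
  have h2 := cross_eq_of_collinear hC₂
  simp only [hO, hE0, hE1, PiLp.zero_apply, sub_zero] at h1
  have h1' : c * C 1 = s * C 0 := by
    have : R * c ≠ 0 := by positivity
    apply mul_left_cancel₀ this
    linear_combination h1
  -- `d` is the coordinate of `C` along the unit vector `(c, s)` spanning the line `OE`.
  obtain ⟨d, hd⟩ : ∃ d, d = c * C 0 + s * C 1 := ⟨_, rfl⟩
  have hC0 : C 0 = d * c := by
    rw [hd]; linear_combination (-C 0) * hsc - s * h1'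
  have hC1 : C 1 = d * s := by
    rw [hd]; linear_combination (-C 1) * hsc + c * h1'
  rw [hB00, hB01, hB10, hB11, hC0, hC1] at h2
  have key : (2 * a - 2 * x * s ^ 2) * (d - R * c) = -(x * (a - x) * (2 * s * c)) := by
    -- The cross product is invariant under rotation: up to sign, `h2` is this
    -- equation times `s ^ 2 + c ^ 2`.
    linear_combination -h2 -
      ((2 * a - 2 * x * s ^ 2) * (d - R * c) + x * (a - x) * (2 * s * c)) * hsc
  have hden : 0 < 2 * a - 2 * x * s ^ 2 := by
    have h : 2 * a - 2 * x * s ^ 2 = 2 * (a - x) + 2 * x * c ^ 2 := by rw [hc2]; ring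
    have h' : 0 < 2 * x * c ^ 2 := by positivity
    rw [h]; linarith only [h', hxa]
  have hnum : 0 ≤ x * (a - x) * (2 * s * c) :=
    mul_nonneg (mul_nonneg hx.le (by linarith)) (by positivity)
  have hdR : R * c - d = x * (a - x) * (2 * s * c) / (2 * a - 2 * x * s ^ 2) := by
    rw [eq_div_iff hden.ne']; linear_combination -key
  have hnn : 0 ≤ R * c - d := by rw [hdR]; exact div_nonneg hnum hden.le
  rw [← hdR, EuclideanSpace.dist_eq, Fin.sum_univ_two, Real.dist_eq, Real.dist_eq, sq_abs, sq_abs,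
    hC0, hC1, hE0, hE1, ← Real.sqrt_sq hnn]
  congr 1
  linear_combination (d - R * c) ^ 2 * hsc
end
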